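/- arXiv:2509.11069 — 2 statements merged into one kernel-verified Lean document; each statement's English description precedes it below -/
import Mathlib

section
/- Under the hypotheses (H1)–(H4) of the preceding existence theorem (A RAP with exponential dichotomy and RAP-integral Green kernel; f RAP in t uniformly, Lipschitz with M(r) < α/(2K); ξ the unique RAP solution of y' = A(t)y + f(t,y); f C² in x with RAP Jacobian along ξ and δ < α/(4K²); g_ν RAP in t uniformly with g₀ ≡ 0, ‖g_ν‖_r → 0 and Lipschitz constants M₁(r,ν) → 0 as ν → 0⁺), assume additionally that g(t,x,ν) is uniformly continuous on ℝ × B[0,r̃] × [0,ν₀]. Then the unique RAP solutions ψ_ν of x' = A(t)x + f(t,x) + g_ν(t,x) lying in the r-neighborhood of ξ satisfy sup_{t∈ℝ} ‖ψ_ν(t) − ξ(t)‖ → 0 as ν → 0⁺; in particular ψ_ν(t) → ξ(t) for every t ∈ ℝ. -/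
open MeasureTheory Filter Metric

noncomputable def opNorm {n : ℕ} (A : Matrix (Fin n) (Fin n) ℝ) : ℝ :=
  ‖LinearMap.toContinuousLinearMap (Matrix.toEuclideanLin A)‖

noncomputable def mulVecE {n : ℕ} (A : Matrix (Fin n) (Fin n) ℝ)
    (v : EuclideanSpace ℝ (Fin n)) : EuclideanSpace ℝ (Fin n) :=
  Matrix.toEuclideanLin A v

noncomputable def clmToMatrix {n : ℕ}
    (L : EuclideanSpace ℝ (Fin n) →L[ℝ] EuclideanSpace ℝ (Fin n)) :
    Matrix (Fin n) (Fin n) ℝ :=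
  Matrix.toEuclideanLin.symm (L : EuclideanSpace ℝ (Fin n) →ₗ[ℝ] EuclideanSpace ℝ (Fin n))

def RelativelyDense (S : Set ℝ) : Prop :=
  ∃ l > 0, ∀ a : ℝ, ∃ τ ∈ S, τ ∈ Set.Icc a (a + l)

def RAP {E : Type*} [NormedAddCommGroup E] (f : ℝ → E) : Prop :=
  (∃ C, ∀ t, ‖f t‖ ≤ C) ∧ UniformContinuous f ∧
  ∀ ε > 0, RelativelyDense
    {τ | Filter.limsup (fun t => ‖f (t + τ) - f t‖) (Filter.cocompact ℝ) < ε}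

def RAPUniform {E F : Type*} [NormedAddCommGroup E] [NormedAddCommGroup F]
    (f : ℝ → E → F) (S : Set E) : Prop :=
  (∃ C, ∀ t, ∀ x ∈ S, ‖f t x‖ ≤ C) ∧
  UniformContinuousOn (fun p : ℝ × E => f p.1 p.2) (Set.univ ×ˢ S) ∧
  ∀ ε > 0, RelativelyDense
    {τ | Filter.limsup (fun t => ⨆ x ∈ S, ‖f (t + τ) x - f t x‖) (Filter.cocompact ℝ) < ε}

def RAPMatrix {n : ℕ} (A : ℝ → Matrix (Fin n) (Fin n) ℝ) : Prop :=
  ∀ i j, RAP (fun t => A t i j)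

def IsFundamentalMatrix {n : ℕ} (A Φ : ℝ → Matrix (Fin n) (Fin n) ℝ) : Prop :=
  Φ 0 = 1 ∧ (∀ t, IsUnit (Φ t)) ∧
  ∀ t i j, HasDerivAt (fun τ => Φ τ i j) ((A t * Φ t) i j) t

def ExpDichotomy {n : ℕ} (Φ : ℝ → Matrix (Fin n) (Fin n) ℝ)
    (α K : ℝ) (P : Matrix (Fin n) (Fin n) ℝ) : Prop :=
  P * P = P ∧
  (∀ t s : ℝ, s ≤ t → opNorm (Φ t * P * (Φ s)⁻¹) ≤ K * Real.exp (-α * (t - s))) ∧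
  (∀ t s : ℝ, t < s → opNorm (Φ t * (1 - P) * (Φ s)⁻¹) ≤ K * Real.exp (-α * (s - t)))

noncomputable def GreenKernel {n : ℕ} (Φ : ℝ → Matrix (Fin n) (Fin n) ℝ)
    (P : Matrix (Fin n) (Fin n) ℝ) (t s : ℝ) : Matrix (Fin n) (Fin n) ℝ :=
  if s ≤ t then Φ t * P * (Φ s)⁻¹ else -(Φ t * (1 - P) * (Φ s)⁻¹)

def RAPIntegralProperty {n : ℕ} (G : ℝ → ℝ → Matrix (Fin n) (Fin n) ℝ) : Prop :=
  ∀ h : ℝ → EuclideanSpace ℝ (Fin n), RAP h →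
    RAP (fun t => ∫ s : ℝ, mulVecE (G t s) (h s))


lemma aux_reldense_mono {S T : Set ℝ} (h : S ⊆ T) (hS : RelativelyDense S) : RelativelyDense T := by
  obtain ⟨l, hl, H⟩ := hS
  refine ⟨l, hl, fun a => ?_⟩
  obtain ⟨τ, h1, h2⟩ := H a
  exact ⟨τ, h h1, h2⟩

lemma aux_limsup_lt {u : ℝ → ℝ} {ε : ℝ} (C : ℝ) (hC : ∀ t, u t ≤ C)
    (h : Filter.limsup u (Filter.cocompact ℝ) < ε) : ∀ᶠ t in Filter.cocompact ℝ, u t ≤ ε := by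
  have := Filter.eventually_lt_of_limsup_lt h
    (Filter.isBoundedUnder_of ⟨C, hC⟩)
  filter_upwards [this] with t ht using ht.le

lemma aux_limsup_le {u : ℝ → ℝ} {ε : ℝ} (h0 : ∀ t, 0 ≤ u t)
    (h : ∀ᶠ t in Filter.cocompact ℝ, u t ≤ ε) : Filter.limsup u (Filter.cocompact ℝ) ≤ ε := by
  refine Filter.limsup_le_of_le ?_ h
  exact (Filter.isBoundedUnder_of ⟨0, h0⟩ : Filter.IsBoundedUnder (· ≥ ·) _ u).isCoboundedUnder_le

lemma aux_rap_iff {E : Type*} [NormedAddCommGroup E] (f : ℝ → E) : RAP f ↔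
    ((∃ C, ∀ t, ‖f t‖ ≤ C) ∧ UniformContinuous f ∧
    ∀ ε > 0, RelativelyDense {τ | ∀ᶠ t in Filter.cocompact ℝ, ‖f (t + τ) - f t‖ ≤ ε}) := by
  unfold RAP
  constructor
  · rintro ⟨⟨C, hC⟩, h2, h3⟩
    refine ⟨⟨C, hC⟩, h2, fun ε hε => aux_reldense_mono ?_ (h3 ε hε)⟩
    intro τ hτ
    refine aux_limsup_lt (C + C) (fun t => ?_) hτ
    exact (norm_sub_le _ _).trans (add_le_add (hC _) (hC _))
  · rintro ⟨h1, h2, h3⟩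
    refine ⟨h1, h2, fun ε hε => aux_reldense_mono ?_ (h3 (ε/2) (by positivity))⟩
    intro τ hτ
    have := aux_limsup_le (fun t => norm_nonneg (f (t + τ) - f t)) hτ
    simp only [Set.mem_ofPred_eq]
    linarith

lemma aux_rapu {E F : Type*} [NormedAddCommGroup E] [NormedAddCommGroup F]
    {f : ℝ → E → F} {S : Set E} (h : RAPUniform f S) :
    ∀ ε > 0, RelativelyDense
      {τ | ∀ᶠ t in Filter.cocompact ℝ, ∀ x ∈ S, ‖f (t + τ) x - f t x‖ ≤ ε} := by
  obtain ⟨⟨C, hC⟩, h2, h3⟩ := h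
  intro ε hε
  refine aux_reldense_mono ?_ (h3 ε hε)
  intro τ hτ
  have hb : ∀ t x, (⨆ (_ : x ∈ S), ‖f (t + τ) x - f t x‖) ≤ max 0 (C + C) := by
    intro t x
    by_cases hx : x ∈ S
    · simp only [hx, ciSup_unique]
      exact ((norm_sub_le _ _).trans (add_le_add (hC _ _ hx) (hC _ _ hx))).trans (le_max_right _ _)
    · simp [hx]
  have h4 := aux_limsup_lt (max 0 (C + C)) (fun t => Real.iSup_le (hb t) (le_max_left _ _)) hτ
  filter_upwards [h4] with t ht x hx
  refine le_trans ?_ ht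
  have := le_ciSup (f := fun x => ⨆ (_ : x ∈ S), ‖f (t + τ) x - f t x‖)
    ⟨_, by rintro _ ⟨x, rfl⟩; exact hb t x⟩ x
  simpa [hx] using this

lemma aux_shift {p : ℝ → Prop} (τ : ℝ) (h : ∀ᶠ t in Filter.cocompact ℝ, p t) :
    ∀ᶠ t in Filter.cocompact ℝ, p (t + τ) :=
  ((Homeomorph.addRight τ).isClosedEmbedding.tendsto_cocompact).eventually h

/-- common translation numbers -/
lemma aux_common (D₁ D₂ : ℝ → ℝ → Prop)
    (h1 : ∀ a b x y, D₁ a x → D₁ b y → D₁ (a + b) (x - y))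
    (h2 : ∀ a b x y, D₂ a x → D₂ b y → D₂ (a + b) (x - y))
    (c1 : ∀ ε > 0, ∃ δ > 0, ∀ x, |x| < δ → D₁ ε x)
    (c2 : ∀ ε > 0, ∃ δ > 0, ∀ x, |x| < δ → D₂ ε x)
    (r1 : ∀ ε > 0, RelativelyDense {τ | D₁ ε τ})
    (r2 : ∀ ε > 0, RelativelyDense {τ | D₂ ε τ}) :
    ∀ ε > 0, RelativelyDense {τ | D₁ ε τ ∧ D₂ ε τ} := by
  have cell : ∀ D : ℝ → ℝ → Prop, (∀ a b x y, D a x → D b y → D (a + b) (x - y)) →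
      (∀ ε > 0, ∃ δ > 0, ∀ x, |x| < δ → D ε x) → (∀ ε > 0, RelativelyDense {τ | D ε τ}) →
      ∀ ε > 0, ∃ (N : ℕ) (k : ℝ → Fin N), ∀ x y, k x = k y → D ε (x - y) := by
    intro D h c r ε hε
    obtain ⟨δ, hδ, hc⟩ := c (ε/3) (by positivity)
    obtain ⟨l, hl, hr⟩ := r (ε/3) (by positivity)
    have : ∀ x : ℝ, ∃ σ, D (ε/3) σ ∧ 0 ≤ x - σ ∧ x - σ ≤ l := by
      intro x
      obtain ⟨σ, hσ, hσ1, hσ2⟩ := hr (x - l)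
      exact ⟨σ, hσ, by linarith, by linarith⟩
    choose σ hσ hσ0 hσl using this
    refine ⟨⌊l/δ⌋₊ + 1, fun x => ⟨⌊(x - σ x)/δ⌋₊, Nat.lt_succ_of_le (Nat.floor_mono ?_)⟩, ?_⟩
    · have := hσl x
      gcongr
    · intro x y hxy
      simp only [Fin.mk.injEq] at hxy
      have e : x - y = (σ x - σ y) - ((y - σ y) - (x - σ x)) := by ring
      have e2 : ε = (ε/3 + ε/3) + ε/3 := by ring
      rw [e, e2]
      refine h _ _ _ _ (h _ _ _ _ (hσ x) (hσ y)) (hc _ ?_)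
      have hx0 : 0 ≤ (x - σ x)/δ := div_nonneg (hσ0 x) hδ.le
      have hy0 : 0 ≤ (y - σ y)/δ := div_nonneg (hσ0 y) hδ.le
      have a1 := Nat.floor_le hx0
      have a2 := Nat.lt_floor_add_one ((x - σ x)/δ)
      have b1 := Nat.floor_le hy0
      have b2 := Nat.lt_floor_add_one ((y - σ y)/δ)
      rw [hxy] at a1 a2
      have : |(y - σ y)/δ - (x - σ x)/δ| < 1 := by rw [abs_lt]; constructor <;> linarith
      rwa [← sub_div, abs_div, abs_of_pos hδ, div_lt_one hδ] at this
  intro ε hε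
  obtain ⟨N, k, hk⟩ := cell D₁ h1 c1 r1 ε hε
  obtain ⟨N', k', hk'⟩ := cell D₂ h2 c2 r2 ε hε
  have : ∀ c : Fin N × Fin N', ∃ y : ℝ, ∀ x, (k x, k' x) = c → (k y, k' y) = c := by
    intro c
    by_cases h : ∃ x, (k x, k' x) = c
    · obtain ⟨x, hx⟩ := h
      exact ⟨x, fun _ _ => hx⟩
    · exact ⟨0, fun x hx => (h ⟨x, hx⟩).elim⟩
  choose y hy using this
  obtain ⟨L, hL⟩ : ∃ L, ∀ c, |y c| ≤ L := by
    obtain ⟨L, hL⟩ := (Set.finite_range (fun c => |y c|)).bddAbove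
    exact ⟨L, fun c => hL ⟨c, rfl⟩⟩
  have hL0 : 0 ≤ L := (abs_nonneg _).trans (hL (k 0, k' 0))
  refine ⟨2 * L + 1, by linarith, fun a => ?_⟩
  set x := a + L
  have hxx := hy (k x, k' x) x rfl
  have hLL := abs_le.1 (hL (k x, k' x))
  simp only [Prod.mk.injEq] at hxx
  refine ⟨x - y (k x, k' x), ⟨hk _ _ hxx.1.symm, hk' _ _ hxx.2.symm⟩, ?_, ?_⟩ <;> simp only [x] at * <;> linarith

lemma aux_D_sub {E F : Type*} [NormedAddCommGroup F] (f : ℝ → E → F) (S : Set E)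
    (a b x y : ℝ)
    (hx : ∀ᶠ t in Filter.cocompact ℝ, ∀ z ∈ S, ‖f (t + x) z - f t z‖ ≤ a)
    (hy : ∀ᶠ t in Filter.cocompact ℝ, ∀ z ∈ S, ‖f (t + y) z - f t z‖ ≤ b) :
    ∀ᶠ t in Filter.cocompact ℝ, ∀ z ∈ S, ‖f (t + (x - y)) z - f t z‖ ≤ a + b := by
  filter_upwards [aux_shift (-y) hx, aux_shift (-y) hy] with t h1 h2 z hz
  have h1 := h1 z hz
  have h2 := h2 z hz
  rw [show t + -y + x = t + (x - y) by ring] at h1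
  rw [show t + -y + y = t by ring, norm_sub_rev] at h2
  calc _ = ‖(f (t + (x - y)) z - f (t + -y) z) + (f (t + -y) z - f t z)‖ := by congr 1; abel
    _ ≤ _ := (norm_add_le _ _).trans (add_le_add h1 h2)

lemma aux_rap_comp {E F : Type*} [NormedAddCommGroup E] [NormedAddCommGroup F]
    {f : ℝ → E → F} {S : Set E} (hf : RAPUniform f S) {φ : ℝ → E} (hφ : RAP φ)
    (hS : ∀ t, φ t ∈ S) : RAP (fun t => f t (φ t)) := by
  have hfd := aux_rapu hf
  obtain ⟨⟨C, hC⟩, huc, -⟩ := hf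
  obtain ⟨-, φuc, φd⟩ := (aux_rap_iff φ).1 hφ
  rw [aux_rap_iff]
  refine ⟨⟨C, fun t => hC _ _ (hS t)⟩, ?_, ?_⟩
  · rw [Metric.uniformContinuous_iff]
    intro ε hε
    rw [Metric.uniformContinuousOn_iff] at huc
    obtain ⟨δ, hδ, h⟩ := huc ε hε
    obtain ⟨δ', hδ', h'⟩ := Metric.uniformContinuous_iff.1 φuc δ hδ
    refine ⟨min δ δ', lt_min hδ hδ', fun {a b} hab => ?_⟩
    refine h (a, φ a) ⟨trivial, hS a⟩ (b, φ b) ⟨trivial, hS b⟩ ?_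
    rw [Prod.dist_eq]
    exact max_lt (hab.trans_le (min_le_left _ _)) (h' (hab.trans_le (min_le_right _ _)))
  · intro ε hε
    rw [Metric.uniformContinuousOn_iff] at huc
    obtain ⟨δ, hδ, h⟩ := huc (ε/2) (by positivity)
    have key := aux_common
      (fun ε τ => ∀ᶠ t in Filter.cocompact ℝ, ∀ x ∈ S, ‖f (t + τ) x - f t x‖ ≤ ε)
      (fun ε τ => ∀ᶠ t in Filter.cocompact ℝ, ‖φ (t + τ) - φ t‖ ≤ ε)
      (aux_D_sub f S)
      (fun a b x y hx hy => by
        simpa using aux_D_sub (fun t (_ : Unit) => φ t) Set.univ a b x y (by simpa using hx)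
          (by simpa using hy))
      (by
        intro ε hε
        obtain ⟨δ, hδ, h⟩ := huc ε hε
        refine ⟨δ, hδ, fun x hx => Eventually.of_forall fun t z hz => ?_⟩
        have := h (t + x, z) ⟨trivial, hz⟩ (t, z) ⟨trivial, hz⟩ (by
          simp [Prod.dist_eq, hx, hδ])
        rw [dist_eq_norm] at this
        exact this.le)
      (by
        intro ε hε
        obtain ⟨δ, hδ, h⟩ := Metric.uniformContinuous_iff.1 φuc ε hε
        refine ⟨δ, hδ, fun x hx => Eventually.of_forall fun t => ?_⟩
        have := @h (t + x) t (by simp [hx])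
        rw [dist_eq_norm] at this
        exact this.le)
      hfd φd (min (ε/2) (δ/2)) (by positivity)
    refine aux_reldense_mono ?_ key
    rintro τ ⟨h1, h2⟩
    simp only [Set.mem_ofPred_eq]
    filter_upwards [h1, h2] with t h1 h2
    have a1 := (h1 _ (hS (t + τ))).trans (min_le_left _ _)
    have a2 := h (t, φ (t + τ)) ⟨trivial, hS _⟩ (t, φ t) ⟨trivial, hS _⟩ (by
      rw [Prod.dist_eq, dist_eq_norm, dist_eq_norm]
      have := h2.trans (min_le_right _ _)
      simp only [sub_self, norm_zero]
      exact max_lt hδ (by linarith))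
    rw [dist_eq_norm] at a2
    calc _ = ‖(f (t + τ) (φ (t + τ)) - f t (φ (t + τ))) + (f t (φ (t + τ)) - f t (φ t))‖ := by
          congr 1; abel
      _ ≤ ε/2 + ε/2 := (norm_add_le _ _).trans (add_le_add a1 a2.le)
      _ = ε := by ring

lemma aux_rap_add {E : Type*} [NormedAddCommGroup E] {u v : ℝ → E} (hu : RAP u) (hv : RAP v) :
    RAP (fun t => u t + v t) := by
  obtain ⟨⟨C, hC⟩, hvc⟩ := hv.1, hv
  obtain ⟨⟨B, hB⟩, huc, hud⟩ := (aux_rap_iff u).1 hu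
  refine aux_rap_comp (f := fun t x => u t + x) (S := {x | ‖x‖ ≤ C}) ⟨⟨B + C, ?_⟩, ?_, ?_⟩ hv hC
  · intro t x hx
    exact (norm_add_le _ _).trans (add_le_add (hB t) hx)
  · apply UniformContinuous.uniformContinuousOn
    exact (huc.comp uniformContinuous_fst).add uniformContinuous_snd
  · intro ε hε
    refine aux_reldense_mono ?_ (hud (ε/2) (by positivity))
    intro τ hτ
    have : Filter.limsup (fun t => ⨆ x ∈ {x : E | ‖x‖ ≤ C}, ‖u (t + τ) + x - (u t + x)‖)
        (Filter.cocompact ℝ) ≤ ε/2 := by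
      refine aux_limsup_le (fun t => ?_) ?_
      · exact Real.iSup_nonneg fun x => Real.iSup_nonneg fun _ => norm_nonneg _
      · filter_upwards [hτ] with t ht
        refine Real.iSup_le (fun x => Real.iSup_le (fun _ => ?_) (by positivity)) (by positivity)
        simpa using ht
    simp only [Set.mem_ofPred_eq] at this ⊢
    linarith

lemma aux_rap_prod {E F : Type*} [NormedAddCommGroup E] [NormedAddCommGroup F] {u : ℝ → E}
    (hu : RAP u) (c : F) : RAP (fun t => (u t, c)) := by
  rw [aux_rap_iff] at hu ⊢
  obtain ⟨⟨B, hB⟩, huc, hud⟩ := hu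
  refine ⟨⟨max B ‖c‖, fun t => ?_⟩, huc.prodMk uniformContinuous_const, fun ε hε => ?_⟩
  · rw [Prod.norm_def]
    exact max_le_max (hB t) le_rfl
  · refine aux_reldense_mono ?_ (hud ε hε)
    intro τ hτ
    simpa [Prod.norm_def, hε.le] using hτ

lemma aux_rap_closed {E : Type*} [NormedAddCommGroup E] {u : ℝ → E}
    (h : ∀ ε > 0, ∃ v, RAP v ∧ ∀ t, ‖u t - v t‖ ≤ ε) : RAP u := by
  have tri : ∀ (v : ℝ → E) (e : ℝ) (s t : ℝ), (∀ t, ‖u t - v t‖ ≤ e) →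
      ‖u s - u t‖ ≤ e + ‖v s - v t‖ + e := by
    intro v e s t hv
    calc ‖u s - u t‖ = ‖(u s - v s) + (v s - v t) - (u t - v t)‖ := by congr 1; abel
      _ ≤ _ := (norm_sub_le _ _).trans (add_le_add ((norm_add_le _ _).trans
        (add_le_add (hv s) le_rfl)) (hv t))
  rw [aux_rap_iff]
  refine ⟨?_, ?_, ?_⟩
  · obtain ⟨v, ⟨⟨C, hC⟩, -⟩, hv⟩ := h 1 one_pos
    refine ⟨C + 1, fun t => ?_⟩
    calc ‖u t‖ = ‖v t + (u t - v t)‖ := by congr 1; abel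
      _ ≤ _ := (norm_add_le _ _).trans (add_le_add (hC t) (hv t))
  · rw [Metric.uniformContinuous_iff]
    intro ε hε
    obtain ⟨v, hv, hv2⟩ := h (ε/3) (by positivity)
    obtain ⟨δ, hδ, hh⟩ := Metric.uniformContinuous_iff.1 hv.2.1 (ε/3) (by positivity)
    refine ⟨δ, hδ, fun {a b} hab => ?_⟩
    have := hh hab
    rw [dist_eq_norm] at this ⊢
    have := tri v _ a b hv2
    linarith
  · intro ε hε
    obtain ⟨v, hv, hv2⟩ := h (ε/3) (by positivity)
    rw [aux_rap_iff] at hv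
    refine aux_reldense_mono ?_ (hv.2.2 (ε/3) (by positivity))
    intro τ hτ
    simp only [Set.mem_ofPred_eq] at hτ ⊢
    filter_upwards [hτ] with t ht
    have := tri v _ (t + τ) t hv2
    linarith

set_option linter.unusedSectionVars false

section green
variable {E : Type*} [NormedAddCommGroup E] [NormedSpace ℝ E] [CompleteSpace E]

noncomputable def auxG (U V : ℝ → E →L[ℝ] E) (p : E →L[ℝ] E) (t s : ℝ) : E →L[ℝ] E :=
  if s ≤ t then U t * p * V s else -(U t * (1 - p) * V s)

structure AuxDich (a U V : ℝ → E →L[ℝ] E) (p : E →L[ℝ] E) (α K : ℝ) : Prop where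
  hα : 0 < α
  hK : 0 ≤ K
  uv : ∀ t, U t * V t = 1
  vu : ∀ t, V t * U t = 1
  der : ∀ t, HasDerivAt U (a t * U t) t
  der' : ∀ t, HasDerivAt V (-(V t * a t)) t
  pp : p * p = p
  b1 : ∀ t s, s ≤ t → ‖U t * p * V s‖ ≤ K * Real.exp (-α * (t - s))
  b2 : ∀ t s, t < s → ‖U t * (1 - p) * V s‖ ≤ K * Real.exp (-α * (s - t))

variable {a U V : ℝ → E →L[ℝ] E} {p : E →L[ℝ] E} {α K : ℝ}

lemma aux_exp_iic (hα : 0 < α) (t : ℝ) :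
    IntegrableOn (fun s => Real.exp (-α * (t - s))) (Set.Iic t) ∧
    ∫ s in Set.Iic t, Real.exp (-α * (t - s)) = 1 / α := by
  have e : (fun s => Real.exp (-α * (t - s))) = fun s => Real.exp (-α * t) * Real.exp (α * s) := by
    funext s
    rw [← Real.exp_add]; congr 1; ring
  rw [e]
  constructor
  · exact (integrableOn_exp_mul_Iic hα t).const_mul _
  · rw [MeasureTheory.integral_const_mul, integral_exp_mul_Iic hα]
    rw [← mul_div_assoc, ← Real.exp_add]
    simp

lemma aux_exp_ioi (hα : 0 < α) (t : ℝ) :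
    IntegrableOn (fun s => Real.exp (-α * (s - t))) (Set.Ioi t) ∧
    ∫ s in Set.Ioi t, Real.exp (-α * (s - t)) = 1 / α := by
  have e : (fun s => Real.exp (-α * (s - t))) = fun s => Real.exp (α * t) * Real.exp (-α * s) := by
    funext s
    rw [← Real.exp_add]; congr 1; ring
  rw [e]
  constructor
  · exact (integrableOn_exp_mul_Ioi (by linarith) t).const_mul _
  · rw [MeasureTheory.integral_const_mul, integral_exp_mul_Ioi (by linarith)]
    rw [neg_div_neg_eq, ← mul_div_assoc, ← Real.exp_add]
    simp

lemma AuxDich.contV (H : AuxDich a U V p α K) : Continuous V :=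
  continuous_iff_continuousAt.2 fun t => (H.der' t).continuousAt

lemma AuxDich.i1 (H : AuxDich a U V p α K) {h : ℝ → E} (hc : Continuous h) {C : ℝ}
    (hC : ∀ t, ‖h t‖ ≤ C) (t : ℝ) :
    IntegrableOn (fun s => (U t * p * V s) (h s)) (Set.Iic t) := by
  have hV := H.contV
  refine Integrable.mono' (((aux_exp_iic H.hα t).1.const_mul K).mul_const C) ?_ ?_
  · have : Continuous (fun s => (U t * p * V s) (h s)) := by
      apply Continuous.clm_apply _ hc
      exact continuous_const.mul hV
    exact this.aestronglyMeasurable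
  · refine (ae_restrict_iff' measurableSet_Iic).2 (Eventually.of_forall fun s hs => ?_)
    exact (ContinuousLinearMap.le_opNorm _ _).trans (mul_le_mul (H.b1 t s hs) (hC s) (norm_nonneg _)
      (mul_nonneg H.hK (Real.exp_nonneg _)))

lemma AuxDich.i2 (H : AuxDich a U V p α K) {h : ℝ → E} (hc : Continuous h) {C : ℝ}
    (hC : ∀ t, ‖h t‖ ≤ C) (t : ℝ) :
    IntegrableOn (fun s => (U t * (1 - p) * V s) (h s)) (Set.Ioi t) := by
  have hV := H.contV
  refine Integrable.mono' (((aux_exp_ioi H.hα t).1.const_mul K).mul_const C) ?_ ?_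
  · have : Continuous (fun s => (U t * (1 - p) * V s) (h s)) := by
      apply Continuous.clm_apply _ hc
      exact continuous_const.mul hV
    exact this.aestronglyMeasurable
  · refine (ae_restrict_iff' measurableSet_Ioi).2 (Eventually.of_forall fun s hs => ?_)
    exact (ContinuousLinearMap.le_opNorm _ _).trans (mul_le_mul (H.b2 t s hs) (hC s) (norm_nonneg _)
      (mul_nonneg H.hK (Real.exp_nonneg _)))

lemma auxG_on1 (h : ℝ → E) (t : ℝ) :
    Set.EqOn (fun s => auxG U V p t s (h s)) (fun s => (U t * p * V s) (h s)) (Set.Iic t) := by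
  intro s hs
  have : s ≤ t := hs
  simp [auxG, this]

lemma auxG_on2 (h : ℝ → E) (t : ℝ) :
    Set.EqOn (fun s => auxG U V p t s (h s)) (fun s => -(U t * (1 - p) * V s) (h s))
      (Set.Ioi t) := by
  intro s hs
  have : ¬ s ≤ t := not_le.2 hs
  simp only [auxG, this, if_false]
  rfl

lemma AuxDich.integ (H : AuxDich a U V p α K) {h : ℝ → E} (hc : Continuous h) {C : ℝ}
    (hC : ∀ t, ‖h t‖ ≤ C) (t : ℝ) : Integrable (fun s => auxG U V p t s (h s)) := by
  rw [← integrableOn_univ, ← Set.Iic_union_Ioi (a := t)]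
  refine IntegrableOn.union ?_ ?_
  · exact (H.i1 hc hC t).congr_fun (auxG_on1 h t).symm measurableSet_Iic
  · exact (H.i2 hc hC t).neg.congr_fun (auxG_on2 h t).symm measurableSet_Ioi

lemma AuxDich.split (H : AuxDich a U V p α K) {h : ℝ → E} (hc : Continuous h) {C : ℝ}
    (hC : ∀ t, ‖h t‖ ≤ C) (t : ℝ) : ∫ s, auxG U V p t s (h s) =
      (∫ s in Set.Iic t, (U t * p * V s) (h s)) - ∫ s in Set.Ioi t, (U t * (1 - p) * V s) (h s) := by
  have hi := H.integ hc hC t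
  rw [← setIntegral_univ, ← Set.Iic_union_Ioi (a := t),
    setIntegral_union (Set.Iic_disjoint_Ioi le_rfl) measurableSet_Ioi hi.integrableOn hi.integrableOn,
    setIntegral_congr_fun measurableSet_Iic (auxG_on1 h t),
    setIntegral_congr_fun measurableSet_Ioi (auxG_on2 h t), integral_neg]
  exact (sub_eq_add_neg _ _).symm

lemma AuxDich.bound (H : AuxDich a U V p α K) {h : ℝ → E} (hc : Continuous h) {C : ℝ}
    (hC : ∀ t, ‖h t‖ ≤ C) (t : ℝ) : ‖∫ s, auxG U V p t s (h s)‖ ≤ 2 * K / α * C := by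
  rw [H.split hc hC t]
  have e1 : ‖∫ s in Set.Iic t, (U t * p * V s) (h s)‖ ≤ K * (1/α) * C := by
    rw [← (aux_exp_iic H.hα t).2, ← MeasureTheory.integral_const_mul,
      ← MeasureTheory.integral_mul_const]
    refine norm_integral_le_of_norm_le (((aux_exp_iic H.hα t).1.const_mul K).mul_const C) ?_
    refine (ae_restrict_iff' measurableSet_Iic).2 (Eventually.of_forall fun s hs => ?_)
    exact (ContinuousLinearMap.le_opNorm _ _).trans (mul_le_mul (H.b1 t s hs) (hC s) (norm_nonneg _)
      (mul_nonneg H.hK (Real.exp_nonneg _)))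
  have e2 : ‖∫ s in Set.Ioi t, (U t * (1 - p) * V s) (h s)‖ ≤ K * (1/α) * C := by
    rw [← (aux_exp_ioi H.hα t).2, ← MeasureTheory.integral_const_mul,
      ← MeasureTheory.integral_mul_const]
    refine norm_integral_le_of_norm_le (((aux_exp_ioi H.hα t).1.const_mul K).mul_const C) ?_
    refine (ae_restrict_iff' measurableSet_Ioi).2 (Eventually.of_forall fun s hs => ?_)
    exact (ContinuousLinearMap.le_opNorm _ _).trans (mul_le_mul (H.b2 t s hs) (hC s) (norm_nonneg _)
      (mul_nonneg H.hK (Real.exp_nonneg _)))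
  calc _ ≤ _ := norm_sub_le _ _
    _ ≤ K * (1/α) * C + K * (1/α) * C := add_le_add e1 e2
    _ = _ := by ring

lemma AuxDich.bound_sub (H : AuxDich a U V p α K) {h h' : ℝ → E} (hc : Continuous h)
    (hc' : Continuous h') {C C' D : ℝ}
    (hC : ∀ t, ‖h t‖ ≤ C) (hC' : ∀ t, ‖h' t‖ ≤ C') (hD : ∀ t, ‖h t - h' t‖ ≤ D) (t : ℝ) :
    ‖(∫ s, auxG U V p t s (h s)) - ∫ s, auxG U V p t s (h' s)‖ ≤ 2 * K / α * D := by
  rw [← integral_sub (H.integ hc hC t) (H.integ hc' hC' t)]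
  simp_rw [← map_sub]
  exact H.bound (hc.sub hc') hD t

lemma AuxDich.sol (H : AuxDich a U V p α K) {h : ℝ → E} (hc : Continuous h) {C : ℝ}
    (hC : ∀ t, ‖h t‖ ≤ C) (t : ℝ) :
    HasDerivAt (fun t => ∫ s, auxG U V p t s (h s))
      (a t (∫ s, auxG U V p t s (h s)) + h t) t := by
  have hV := H.contV
  have j1 : ∀ t, IntegrableOn (fun s => (p * V s) (h s)) (Set.Iic t) := by
    intro t
    have := (V t).integrable_comp (H.i1 hc hC t)
    refine this.congr (Eventually.of_forall fun s => ?_)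
    change (V t * (U t * p * V s)) (h s) = _
    rw [← mul_assoc, ← mul_assoc, H.vu, one_mul]
  have j2 : ∀ t, IntegrableOn (fun s => ((1 - p) * V s) (h s)) (Set.Ioi t) := by
    intro t
    have := (V t).integrable_comp (H.i2 hc hC t)
    refine this.congr (Eventually.of_forall fun s => ?_)
    change (V t * (U t * (1 - p) * V s)) (h s) = _
    rw [← mul_assoc, ← mul_assoc, H.vu, one_mul]
  have c1 : Continuous (fun s => (p * V s) (h s)) := (continuous_const.mul hV).clm_apply hc
  have c2 : Continuous (fun s => ((1 - p) * V s) (h s)) := (continuous_const.mul hV).clm_apply hc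
  have c3 : Continuous (fun s => V s (h s)) := hV.clm_apply hc
  set z0 : E := (∫ s in Set.Iic 0, (p * V s) (h s)) - ∫ s in Set.Ioi 0, ((1 - p) * V s) (h s)
  have rep : ∀ t, ∫ s, auxG U V p t s (h s) = U t (z0 + ∫ s in (0:ℝ)..t, V s (h s)) := by
    intro t
    rw [H.split hc hC t]
    have r1 : ∫ s in Set.Iic t, (U t * p * V s) (h s) = U t (∫ s in Set.Iic t, (p * V s) (h s)) :=
      (U t).integral_comp_comm (j1 t)
    have r2 : ∫ s in Set.Ioi t, (U t * (1 - p) * V s) (h s) =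
        U t (∫ s in Set.Ioi t, ((1 - p) * V s) (h s)) :=
      (U t).integral_comp_comm (j2 t)
    rw [r1, r2, ← map_sub]
    congr 1
    have s1 := intervalIntegral.integral_Iic_sub_Iic (j1 0) (j1 t)
    have s2 := intervalIntegral.integral_Ioi_sub_Ioi' (j2 0) (j2 t)
    have s3 : ∫ s in (0:ℝ)..t, V s (h s) =
        (∫ s in (0:ℝ)..t, (p * V s) (h s)) + ∫ s in (0:ℝ)..t, ((1 - p) * V s) (h s) := by
      rw [← intervalIntegral.integral_add (c1.intervalIntegrable _ _) (c2.intervalIntegrable _ _)]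
      congr 1
      funext s
      rw [← add_apply, ← add_mul]
      simp
    rw [s3, ← s1, ← s2]
    simp only [z0]
    abel
  have e : (fun t => ∫ s, auxG U V p t s (h s)) =
      fun t => U t (z0 + ∫ s in (0:ℝ)..t, V s (h s)) := funext rep
  rw [e, rep t]
  have d1 : HasDerivAt (fun t => z0 + ∫ s in (0:ℝ)..t, V s (h s)) (V t (h t)) t :=
    (c3.integral_hasStrictDerivAt 0 t).hasDerivAt.const_add z0
  have d2 := (H.der t).clm_apply d1
  convert d2 using 1
  rw [show U t (V t (h t)) = (U t * V t) (h t) from rfl, H.uv]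
  rfl

lemma AuxDich.zero (H : AuxDich a U V p α K) {w : ℝ → E} {C : ℝ} (hC : ∀ t, ‖w t‖ ≤ C)
    (hw : ∀ t, HasDerivAt w (a t (w t)) t) (t : ℝ) : w t = 0 := by
  have hd : ∀ t, HasDerivAt (fun t => V t (w t)) 0 t := by
    intro t
    convert (H.der' t).clm_apply (hw t) using 1
    rw [neg_apply]
    exact (neg_add_cancel _).symm
  have hconst : ∀ t, V t (w t) = V 0 (w 0) := fun t =>
    is_const_of_deriv_eq_zero (fun t => (hd t).differentiableAt) (fun t => (hd t).deriv) t 0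
  have hC0 : 0 ≤ C := (norm_nonneg _).trans (hC 0)
  have lim : Tendsto (fun x : ℝ => K * Real.exp (-α * x) * C) atTop (nhds 0) := by
    have : Tendsto (fun x : ℝ => Real.exp (-α * x)) atTop (nhds 0) := by
      apply Real.tendsto_exp_atBot.comp
      exact tendsto_id.const_mul_atTop_of_neg (by linarith [H.hα])
    simpa using (this.const_mul K).mul_const C
  have z1 : (U 0 * p) (V 0 (w 0)) = 0 := by
    rw [← norm_eq_zero]
    refine le_antisymm (ge_of_tendsto lim ?_) (norm_nonneg _)
    filter_upwards [eventually_ge_atTop 0] with x hx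
    rw [← hconst (-x)]
    calc ‖(U 0 * p * V (-x)) (w (-x))‖ ≤ _ := ContinuousLinearMap.le_opNorm _ _
      _ ≤ K * Real.exp (-α * (0 - (-x))) * C := mul_le_mul (H.b1 0 (-x) (by linarith)) (hC _)
        (norm_nonneg _) (mul_nonneg H.hK (Real.exp_nonneg _))
      _ = _ := by simp
  have z2 : (U 0 * (1 - p)) (V 0 (w 0)) = 0 := by
    rw [← norm_eq_zero]
    refine le_antisymm (ge_of_tendsto lim ?_) (norm_nonneg _)
    filter_upwards [eventually_gt_atTop 0] with x hx
    rw [← hconst x]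
    calc ‖(U 0 * (1 - p) * V x) (w x)‖ ≤ _ := ContinuousLinearMap.le_opNorm _ _
      _ ≤ K * Real.exp (-α * (x - 0)) * C := mul_le_mul (H.b2 0 x hx) (hC _)
        (norm_nonneg _) (mul_nonneg H.hK (Real.exp_nonneg _))
      _ = _ := by simp
  have z3 : U 0 (V 0 (w 0)) = 0 := by
    have : U 0 = U 0 * p + U 0 * (1 - p) := by rw [← mul_add]; simp
    rw [this, add_apply, z1, z2, add_zero]
  have z4 : V 0 (w 0) = 0 := by
    have : (V 0 * U 0) (V 0 (w 0)) = V 0 (U 0 (V 0 (w 0))) := rfl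
    rw [z3, H.vu, map_zero] at this
    exact this
  have : (U t * V t) (w t) = U t (V t (w t)) := rfl
  rw [hconst, z4, map_zero, H.uv] at this
  exact this

lemma AuxDich.repr (H : AuxDich a U V p α K) {h : ℝ → E} (hc : Continuous h) {C : ℝ}
    (hC : ∀ t, ‖h t‖ ≤ C) {x : ℝ → E} {B : ℝ} (hB : ∀ t, ‖x t‖ ≤ B)
    (hx : ∀ t, HasDerivAt x (a t (x t) + h t) t) (t : ℝ) :
    x t = ∫ s, auxG U V p t s (h s) := by
  rw [← sub_eq_zero]
  refine H.zero (w := fun t => x t - ∫ s, auxG U V p t s (h s)) (C := B + 2 * K / α * C) ?_ ?_ t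
  · intro t
    exact (norm_sub_le _ _).trans (add_le_add (hB t) (H.bound hc hC t))
  · intro t
    refine ((hx t).fun_sub (H.sol hc hC t)).congr_deriv ?_
    rw [map_sub]
    abel

end green

lemma aux_dich_matrix {n : ℕ} {A Φ : ℝ → Matrix (Fin n) (Fin n) ℝ}
    {P : Matrix (Fin n) (Fin n) ℝ} {α K : ℝ} (hα : 0 < α) (hK : 1 ≤ K)
    (hΦ : IsFundamentalMatrix A Φ) (hd : ExpDichotomy Φ α K P) :
    AuxDich (fun t => Matrix.toEuclideanCLM (𝕜 := ℝ) (A t)) (fun t => Matrix.toEuclideanCLM (𝕜 := ℝ) (Φ t))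
      (fun t => Matrix.toEuclideanCLM (𝕜 := ℝ) (Φ t)⁻¹) (Matrix.toEuclideanCLM (𝕜 := ℝ) P) α K := by
  obtain ⟨-, hu, hder⟩ := hΦ
  obtain ⟨hPP, hb1, hb2⟩ := hd
  have uv : ∀ t, Φ t * (Φ t)⁻¹ = 1 := fun t =>
    Matrix.mul_nonsing_inv _ ((Matrix.isUnit_iff_isUnit_det _).1 (hu t))
  have vu : ∀ t, (Φ t)⁻¹ * Φ t = 1 := fun t =>
    Matrix.nonsing_inv_mul _ ((Matrix.isUnit_iff_isUnit_det _).1 (hu t))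
  have der : ∀ t, HasDerivAt (fun t => Matrix.toEuclideanCLM (𝕜 := ℝ) (Φ t))
      (Matrix.toEuclideanCLM (𝕜 := ℝ) (A t) * Matrix.toEuclideanCLM (𝕜 := ℝ) (Φ t)) t := by
    intro t
    have e : ∀ B : Matrix (Fin n) (Fin n) ℝ, Matrix.toEuclideanCLM (𝕜 := ℝ) B =
        ∑ i, ∑ j, B i j • Matrix.toEuclideanCLM (𝕜 := ℝ) (Matrix.single i j (1:ℝ)) := by
      intro B
      conv_lhs => rw [Matrix.matrix_eq_sum_single B]
      simp only [map_sum, ← map_smul, Matrix.smul_single, smul_eq_mul, mul_one]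
    rw [← map_mul, e (A t * Φ t)]
    have e' : (fun t => Matrix.toEuclideanCLM (𝕜 := ℝ) (Φ t)) = fun t =>
      ∑ i, ∑ j, Φ t i j • Matrix.toEuclideanCLM (𝕜 := ℝ) (Matrix.single i j (1:ℝ)) :=
      funext fun t => e _
    rw [e']
    refine HasDerivAt.fun_sum fun i _ => HasDerivAt.fun_sum fun j _ => ?_
    exact HasDerivAt.smul_const (hder t i j)
      (Matrix.toEuclideanCLM (𝕜 := ℝ) (Matrix.single i j (1:ℝ)))
  have uv' : ∀ t, Matrix.toEuclideanCLM (𝕜 := ℝ) (Φ t) * Matrix.toEuclideanCLM (𝕜 := ℝ) (Φ t)⁻¹ = 1 := by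
    intro t; rw [← map_mul, uv, map_one]
  have vu' : ∀ t, Matrix.toEuclideanCLM (𝕜 := ℝ) (Φ t)⁻¹ * Matrix.toEuclideanCLM (𝕜 := ℝ) (Φ t) = 1 := by
    intro t; rw [← map_mul, vu, map_one]
  refine ⟨hα, by linarith, uv', vu', der, ?_, ?_, ?_, ?_⟩
  · intro t
    let u : (EuclideanSpace ℝ (Fin n) →L[ℝ] EuclideanSpace ℝ (Fin n))ˣ := ⟨_, _, uv' t, vu' t⟩
    have h1 := (hasFDerivAt_ringInverse (𝕜 := ℝ) u).comp_hasDerivAt t (der t)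
    have e : (fun t => Matrix.toEuclideanCLM (𝕜 := ℝ) (Φ t)⁻¹) =
        Ring.inverse ∘ (fun t => Matrix.toEuclideanCLM (𝕜 := ℝ) (Φ t)) := by
      funext s
      exact (Ring.inverse_unit (⟨_, _, uv' s, vu' s⟩ :
        (EuclideanSpace ℝ (Fin n) →L[ℝ] EuclideanSpace ℝ (Fin n))ˣ)).symm
    rw [e]
    refine h1.congr_deriv ?_
    rw [neg_apply, ContinuousLinearMap.mulLeftRight_apply]
    change -(Matrix.toEuclideanCLM (𝕜 := ℝ) (Φ t)⁻¹ * _ * Matrix.toEuclideanCLM (𝕜 := ℝ) (Φ t)⁻¹) = _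
    rw [mul_assoc, mul_assoc, uv', mul_one]
  · rw [← map_mul, hPP]
  · intro t s h
    rw [← map_mul, ← map_mul]
    exact hb1 t s h
  · intro t s h
    rw [← map_one (Matrix.toEuclideanCLM (𝕜 := ℝ) (n := Fin n)), ← map_sub, ← map_mul, ← map_mul]
    exact hb2 t s h

lemma aux_green_eq {n : ℕ} (Φ : ℝ → Matrix (Fin n) (Fin n) ℝ)
    (P : Matrix (Fin n) (Fin n) ℝ) (t s : ℝ) (v : EuclideanSpace ℝ (Fin n)) :
    mulVecE (GreenKernel Φ P t s) v =
    auxG (fun t => Matrix.toEuclideanCLM (𝕜 := ℝ) (Φ t))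
      (fun t => Matrix.toEuclideanCLM (𝕜 := ℝ) (Φ t)⁻¹) (Matrix.toEuclideanCLM (𝕜 := ℝ) P) t s v := by
  have : ∀ B : Matrix (Fin n) (Fin n) ℝ, mulVecE B v = Matrix.toEuclideanCLM (𝕜 := ℝ) B v :=
    fun B => rfl
  rw [this]
  unfold GreenKernel auxG
  split_ifs
  · rw [map_mul, map_mul]
  · rw [map_neg, map_mul, map_mul, map_sub, map_one]

lemma aux_rap_comp_par {E F : Type*} [NormedAddCommGroup E] [NormedAddCommGroup F]
    {g : ℝ → E → ℝ → F}
    (hg : ∀ S : Set (E × ℝ), Bornology.IsBounded S →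
      RAPUniform (fun t (p : E × ℝ) => g t p.1 p.2) S) (ν R : ℝ) {φ : ℝ → E} (hφ : RAP φ)
    (hB : ∀ t, ‖φ t‖ ≤ R) : RAP (fun t => g t (φ t) ν) := by
  have h2 : RAP (fun t => (φ t, ν)) := aux_rap_prod hφ ν
  have hb : Bornology.IsBounded (Metric.closedBall (0 : E) R ×ˢ {ν}) :=
    Metric.isBounded_closedBall.prod Bornology.isBounded_singleton
  exact aux_rap_comp (hg _ hb) h2 (fun t => Set.mk_mem_prod (by simpa using hB t) rfl)

lemma aux_fix {E : Type*} [NormedAddCommGroup E] [NormedSpace ℝ E] [CompleteSpace E]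
    {a U V : ℝ → E →L[ℝ] E} {p : E →L[ℝ] E} {α K : ℝ} (H : AuxDich a U V p α K)
    (hG : ∀ h : ℝ → E, RAP h → RAP (fun t => ∫ s, auxG U V p t s (h s)))
    {ξ : ℝ → E} (hξ : RAP ξ) {F : ℝ → E → E}
    (hF : ∀ φ : ℝ → E, RAP φ → (∀ t, ‖φ t - ξ t‖ ≤ 1) → RAP (fun t => F t (φ t)))
    {l D : ℝ} (hl0 : 0 ≤ l) (hl : 2 * K / α * l < 1)
    (hlip : ∀ t x y, ‖x - ξ t‖ ≤ 1 → ‖y - ξ t‖ ≤ 1 → ‖F t x - F t y‖ ≤ l * ‖x - y‖)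
    {h0 : ℝ → E} (hh0 : RAP h0) (hξ0 : ∀ t, ξ t = ∫ s, auxG U V p t s (h0 s))
    (hD : ∀ t x, ‖x - ξ t‖ ≤ 1 → ‖F t x - h0 t‖ ≤ D) (hD1 : 2 * K / α * D ≤ 1) :
    ∃! ψ : ℝ → E, RAP ψ ∧ (∀ t, HasDerivAt ψ (a t (ψ t) + F t (ψ t)) t) ∧
      ∀ t, ‖ψ t - ξ t‖ ≤ 1 := by
  have hc0 : 0 ≤ 2 * K / α := div_nonneg (mul_nonneg two_pos.le H.hK) H.hα.le
  let S : Set (BoundedContinuousFunction ℝ E) := {φ | RAP φ ∧ ∀ t, ‖φ t - ξ t‖ ≤ 1}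
  have hS : IsClosed S := by
    rw [← isSeqClosed_iff_isClosed]
    intro u φ hu hlim
    constructor
    · apply aux_rap_closed
      intro ε hε
      obtain ⟨k, hk⟩ := (Metric.tendsto_atTop.1 hlim ε hε)
      refine ⟨u k, (hu k).1, fun t => ?_⟩
      have h1 := BoundedContinuousFunction.dist_coe_le_dist (f := u k) (g := φ) t
      rw [dist_comm, dist_eq_norm] at h1
      exact h1.trans (hk k le_rfl).le
    · intro t
      have : Tendsto (fun k => u k t) atTop (nhds (φ t)) := by
        rw [tendsto_iff_dist_tendsto_zero] at hlim ⊢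
        exact squeeze_zero (fun _ => dist_nonneg)
          (fun k => BoundedContinuousFunction.dist_coe_le_dist t) hlim
      exact le_of_tendsto (this.sub_const (ξ t)).norm (Eventually.of_forall fun k => (hu k).2 t)
  have : CompleteSpace S := hS.completeSpace_coe
  have mk : ∀ u : ℝ → E, RAP u → (∀ t, ‖u t - ξ t‖ ≤ 1) → ∃ φ : S, ∀ t, φ.1 t = u t := by
    intro u hu hu1
    obtain ⟨C, hC⟩ := hu.1
    exact ⟨⟨BoundedContinuousFunction.ofNormedAddCommGroup u hu.2.1.continuous C hC, hu, hu1⟩,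
      fun t => rfl⟩
  have : Nonempty S := ⟨(mk ξ hξ (by simp)).choose⟩
  obtain ⟨C0, hC0⟩ := hh0.1
  have hT : ∀ φ : S, ∃ ψ : S, ∀ t, ψ.1 t = ∫ s, auxG U V p t s (F s (φ.1 s)) := by
    intro φ
    have hr := hF φ.1 φ.2.1 φ.2.2
    refine mk _ (hG _ hr) fun t => ?_
    obtain ⟨C, hC⟩ := hr.1
    rw [hξ0 t]
    exact (H.bound_sub hr.2.1.continuous hh0.2.1.continuous hC hC0
      (fun s => hD s _ (φ.2.2 s)) t).trans hD1
  choose T hT using hT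
  obtain ⟨q, hq⟩ : ∃ q : NNReal, (q : ℝ) = 2 * K / α * l :=
    ⟨Real.toNNReal _, Real.coe_toNNReal _ (mul_nonneg hc0 hl0)⟩
  have hcontr : ContractingWith q T := by
    refine ⟨by rw [← NNReal.coe_lt_coe, hq]; exact hl, LipschitzWith.of_dist_le_mul fun φ ψ => ?_⟩
    rw [hq]
    change dist (T φ).1 (T ψ).1 ≤ 2 * K / α * l * dist φ.1 ψ.1
    rw [BoundedContinuousFunction.dist_le (by positivity)]
    intro t
    have hr := hF φ.1 φ.2.1 φ.2.2
    have hr' := hF ψ.1 ψ.2.1 ψ.2.2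
    obtain ⟨C, hC⟩ := hr.1
    obtain ⟨C', hC'⟩ := hr'.1
    rw [dist_eq_norm, hT, hT, mul_assoc]
    refine H.bound_sub hr.2.1.continuous hr'.2.1.continuous hC hC' (fun s => ?_) t
    refine (hlip s _ _ (φ.2.2 s) (ψ.2.2 s)).trans ?_
    rw [← dist_eq_norm]
    exact mul_le_mul_of_nonneg_left (BoundedContinuousFunction.dist_coe_le_dist s) hl0
  obtain ⟨x, hx⟩ : ∃ x, T x = x := ⟨_, hcontr.fixedPoint_isFixedPt⟩
  refine ⟨x.1, ⟨x.2.1, ?_, x.2.2⟩, ?_⟩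
  · intro t
    have hr := hF x.1 x.2.1 x.2.2
    obtain ⟨C, hC⟩ := hr.1
    have e : (x.1 : ℝ → E) = fun t => ∫ s, auxG U V p t s (F s (x.1 s)) := by
      funext t
      rw [← hT, hx]
    have := H.sol hr.2.1.continuous hC t
    rw [← hT x t, hx, ← e] at this
    exact this
  · rintro ψ ⟨h1, h2, h3⟩
    obtain ⟨y, hy⟩ := mk ψ h1 h3
    have hr := hF ψ h1 h3
    obtain ⟨C, hC⟩ := hr.1
    obtain ⟨B, hB⟩ := h1.1
    have hfix : T y = y := by
      apply Subtype.ext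
      ext t
      rw [hT, hy, H.repr hr.2.1.continuous hC hB h2 t]
      simp_rw [hy]
    have : y = x := by
      rw [hcontr.fixedPoint_unique (x := y) hfix, hcontr.fixedPoint_unique (x := x) hx]
    rw [← this]
    funext t
    exact (hy t).symm

set_option maxHeartbeats 1000000

/-- convergence of the perturbed RAP solutions `ψ_ν` to `ξ` as `ν → 0⁺`,
under (H1)-(H4) and uniform continuity of `g`. -/
theorem RAP_solutions_converge_to_xi {n : ℕ}
    (A Φ : ℝ → Matrix (Fin n) (Fin n) ℝ)
    (P : Matrix (Fin n) (Fin n) ℝ) (α K : ℝ)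
    (f : ℝ → EuclideanSpace ℝ (Fin n) → EuclideanSpace ℝ (Fin n))
    (ξ : ℝ → EuclideanSpace ℝ (Fin n))
    (g : ℝ → EuclideanSpace ℝ (Fin n) → ℝ → EuclideanSpace ℝ (Fin n))
    (νbar : ℝ) (M : ℝ → ℝ) (M₁ GN : ℝ → ℝ → ℝ)
    (hα : 0 < α) (hK : 1 ≤ K) (hνbar : 0 < νbar)
    -- (H1)
    (hARAP : RAPMatrix A)
    (hΦ : IsFundamentalMatrix A Φ)
    (hdich : ExpDichotomy Φ α K P)
    (hGreen : RAPIntegralProperty (GreenKernel Φ P))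
    -- (H2)
    (hfRAP : ∀ S : Set (EuclideanSpace ℝ (Fin n)), IsCompact S → RAPUniform f S)
    (hM : ∀ r > 0, M r < α / (2 * K))
    (hflip : ∀ r > 0, ∀ t : ℝ, ∀ x y : EuclideanSpace ℝ (Fin n),
      ‖x‖ ≤ r → ‖y‖ ≤ r → ‖f t x - f t y‖ ≤ M r * ‖x - y‖)
    (hξRAP : RAP ξ)
    (hξsol : ∀ t, HasDerivAt ξ (mulVecE (A t) (ξ t) + f t (ξ t)) t)
    (hξuniq : ∀ η : ℝ → EuclideanSpace ℝ (Fin n), RAP η →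
      (∀ t, HasDerivAt η (mulVecE (A t) (η t) + f t (η t)) t) → η = ξ)
    -- (H3)
    (hfC2 : ∀ t, ContDiff ℝ 2 (f t))
    (hf2lip : ∀ r > 0, ∃ L, ∀ t : ℝ, ∀ x y : EuclideanSpace ℝ (Fin n),
      ‖x‖ ≤ r → ‖y‖ ≤ r →
      ‖fderiv ℝ (fderiv ℝ (f t)) x - fderiv ℝ (fderiv ℝ (f t)) y‖ ≤ L * ‖x - y‖)
    (hDfRAP : RAP (fun t => fderiv ℝ (f t) (ξ t)))
    (hDfbdd : BddAbove (Set.range fun t => ‖fderiv ℝ (f t) (ξ t)‖))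
    (δ : ℝ) (hδdef : δ = ⨆ t, ‖fderiv ℝ (f t) (ξ t)‖)
    (hδ : δ < α / (4 * K ^ 2))
    (hvarGreen : ∃ (Ψ : ℝ → Matrix (Fin n) (Fin n) ℝ)
        (Q : Matrix (Fin n) (Fin n) ℝ) (β L : ℝ),
      IsFundamentalMatrix (fun t => A t + clmToMatrix (fderiv ℝ (f t) (ξ t))) Ψ ∧
      ExpDichotomy Ψ β L Q ∧ RAPIntegralProperty (GreenKernel Ψ Q))
    -- (H4)
    (hgRAP : ∀ S : Set (EuclideanSpace ℝ (Fin n) × ℝ), Bornology.IsBounded S →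
      RAPUniform (fun t p => g t p.1 p.2) S)
    (hg0 : ∀ t x, g t x 0 = 0)
    (hgbdd : ∀ ν ∈ Set.Icc (0:ℝ) νbar, ∀ r > 0, ∃ C, ∀ t : ℝ,
      ∀ x : EuclideanSpace ℝ (Fin n), ‖x‖ ≤ r → ‖g t x ν‖ ≤ C)
    (hgGN : ∀ r > 0, ∀ ν ∈ Set.Icc (0:ℝ) νbar, ∀ t : ℝ,
      ∀ x : EuclideanSpace ℝ (Fin n), ‖x‖ ≤ r → ‖g t x ν‖ ≤ GN r ν)
    (hglip : ∀ r > 0, ∀ ν ∈ Set.Icc (0:ℝ) νbar, ∀ t : ℝ,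
      ∀ x y : EuclideanSpace ℝ (Fin n), ‖x‖ ≤ r → ‖y‖ ≤ r →
      ‖g t x ν - g t y ν‖ ≤ M₁ r ν * ‖x - y‖)
    (hGN0 : ∀ r > 0, Filter.Tendsto (GN r) (nhdsWithin 0 (Set.Ioi 0)) (nhds 0))
    (hM₁0 : ∀ r > 0, Filter.Tendsto (M₁ r) (nhdsWithin 0 (Set.Ioi 0)) (nhds 0)) :
    ∃ r > 0, ∃ ν₀ > 0, ν₀ ≤ νbar ∧
      (∀ ν ∈ Set.Icc (0:ℝ) ν₀,
        ∃! ψ : ℝ → EuclideanSpace ℝ (Fin n),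
          RAP ψ ∧
          (∀ t, HasDerivAt ψ (mulVecE (A t) (ψ t) + f t (ψ t) + g t (ψ t) ν) t) ∧
          ∀ t, ‖ψ t - ξ t‖ ≤ r) ∧
      (UniformContinuousOn
          (fun p : ℝ × EuclideanSpace ℝ (Fin n) × ℝ => g p.1 p.2.1 p.2.2)
          (Set.univ ×ˢ Metric.closedBall 0 (r + ⨆ t, ‖ξ t‖) ×ˢ Set.Icc 0 ν₀) →
        ∀ ψ : ℝ → ℝ → EuclideanSpace ℝ (Fin n),
          (∀ ν ∈ Set.Icc (0:ℝ) ν₀, RAP (ψ ν) ∧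
            (∀ t, HasDerivAt (ψ ν) (mulVecE (A t) (ψ ν t) + f t (ψ ν t) + g t (ψ ν t) ν) t) ∧
            ∀ t, ‖ψ ν t - ξ t‖ ≤ r) →
          Filter.Tendsto (fun ν => ⨆ t, ‖ψ ν t - ξ t‖)
            (nhdsWithin 0 (Set.Ioc 0 ν₀)) (nhds 0) ∧
          ∀ t, Filter.Tendsto (fun ν => ψ ν t)
            (nhdsWithin 0 (Set.Ioc 0 ν₀)) (nhds (ξ t))) := by
  have H := aux_dich_matrix hα hK hΦ hdich
  set a : ℝ → EuclideanSpace ℝ (Fin n) →L[ℝ] EuclideanSpace ℝ (Fin n) :=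
    fun t => Matrix.toEuclideanCLM (𝕜 := ℝ) (A t) with ha
  set U : ℝ → EuclideanSpace ℝ (Fin n) →L[ℝ] EuclideanSpace ℝ (Fin n) :=
    fun t => Matrix.toEuclideanCLM (𝕜 := ℝ) (Φ t) with hU
  set V : ℝ → EuclideanSpace ℝ (Fin n) →L[ℝ] EuclideanSpace ℝ (Fin n) :=
    fun t => Matrix.toEuclideanCLM (𝕜 := ℝ) (Φ t)⁻¹ with hV
  set p := Matrix.toEuclideanCLM (𝕜 := ℝ) P with hp
  have hG : ∀ h : ℝ → EuclideanSpace ℝ (Fin n), RAP h →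
      RAP (fun t => ∫ s, auxG U V p t s (h s)) := by
    intro h hh
    have := hGreen h hh
    simp_rw [aux_green_eq] at this
    exact this
  have haA : ∀ t x, mulVecE (A t) x = a t x := fun t x => rfl
  simp_rw [haA] at hξsol ⊢
  obtain ⟨Cξ, hCξ⟩ := hξRAP.1
  set R : ℝ := 1 + ⨆ t, ‖ξ t‖ with hR
  have hξle : ∀ t, ‖ξ t‖ ≤ ⨆ t, ‖ξ t‖ := fun t =>
    le_ciSup (f := fun t => ‖ξ t‖) ⟨Cξ, by rintro _ ⟨t, rfl⟩; exact hCξ t⟩ t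
  have hR0 : 0 < R := by have := (norm_nonneg _).trans (hξle 0); linarith
  have hball : ∀ t x, ‖x - ξ t‖ ≤ 1 → ‖x‖ ≤ R := by
    intro t x hx
    calc ‖x‖ = ‖(x - ξ t) + ξ t‖ := by congr 1; abel
      _ ≤ _ := (norm_add_le _ _).trans (add_le_add hx (hξle t))
  have hξR : ∀ t, ‖ξ t‖ ≤ R := fun t => hball t _ (by simp)
  have hK0 : 0 < K := by linarith
  set m := max (M R) 0 with hm
  set c := 2 * K / α with hcdef
  have hc0 : 0 < c := by positivity
  have hm0 : 0 ≤ m := le_max_right _ _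
  have hcm : c * m < 1 := by
    have h1 : m < α / (2 * K) := max_lt (hM R hR0) (by positivity)
    have h2 : c * (α / (2 * K)) = 1 := by rw [hcdef]; field_simp
    rw [← h2]
    exact mul_lt_mul_of_pos_left h1 hc0
  have hfl : ∀ t x y, ‖x‖ ≤ R → ‖y‖ ≤ R → ‖f t x - f t y‖ ≤ m * ‖x - y‖ := fun t x y hx hy =>
    (hflip R hR0 t x y hx hy).trans (mul_le_mul_of_nonneg_right (le_max_left _ _) (norm_nonneg _))
  -- compositions
  have hfcomp : ∀ φ : ℝ → EuclideanSpace ℝ (Fin n), RAP φ → (∀ t, ‖φ t - ξ t‖ ≤ 1) →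
      RAP (fun t => f t (φ t)) := by
    intro φ hφ h1
    exact aux_rap_comp (hfRAP (Metric.closedBall 0 R) (isCompact_closedBall 0 R)) hφ
      (fun t => by simpa using hball t _ (h1 t))
  have hgcomp : ∀ ν, ∀ φ : ℝ → EuclideanSpace ℝ (Fin n), RAP φ → (∀ t, ‖φ t - ξ t‖ ≤ 1) →
      RAP (fun t => f t (φ t) + g t (φ t) ν) := by
    intro ν φ hφ h1
    refine aux_rap_add (hfcomp φ hφ h1) ?_
    exact aux_rap_comp_par hgRAP ν R hφ (fun t => hball t _ (h1 t))
  have hh0 : RAP (fun t => f t (ξ t)) := hfcomp ξ hξRAP (by simp)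
  obtain ⟨C0, hC0⟩ := hh0.1
  have hξrep : ∀ t, ξ t = ∫ s, auxG U V p t s (f s (ξ s)) := fun t =>
    H.repr hh0.2.1.continuous hC0 hCξ hξsol t
  set e := (1 / c - m) / 2 with he
  have he0 : 0 < e := by
    have : m < 1 / c := by rw [lt_div_iff₀ hc0]; linarith
    simp only [he]; linarith
  have hcme : c * (m + e) < 1 := by
    have : c * (m + e) = (c * m + 1) / 2 := by rw [he]; field_simp; ring
    linarith
  have hev : ∀ᶠ ν in nhdsWithin (0:ℝ) (Set.Ioi 0), M₁ R ν < e ∧ GN R ν < e :=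
    ((hM₁0 R hR0).eventually_lt_const he0).and ((hGN0 R hR0).eventually_lt_const he0)
  obtain ⟨ν₁, hν₁, hν₁'⟩ := mem_nhdsGT_iff_exists_Ioc_subset.1 hev
  have hν₁0 : 0 < ν₁ := hν₁
  refine ⟨1, one_pos, min ν₁ νbar, lt_min hν₁0 hνbar, min_le_right _ _, ?_, ?_⟩
  · intro ν hν
    have hνb : ν ∈ Set.Icc (0:ℝ) νbar := ⟨hν.1, hν.2.trans (min_le_right _ _)⟩
    have hgl : ∀ t x y, ‖x‖ ≤ R → ‖y‖ ≤ R → ‖g t x ν - g t y ν‖ ≤ e * ‖x - y‖ := by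
      intro t x y hx hy
      rcases hν.1.eq_or_lt with h | h
      · rw [← h, hg0, hg0, sub_self, norm_zero]
        positivity
      · refine (hglip R hR0 ν hνb t x y hx hy).trans
          (mul_le_mul_of_nonneg_right (hν₁' ⟨h, hν.2.trans (min_le_left _ _)⟩).1.le (norm_nonneg _))
    have hgb : ∀ t x, ‖x‖ ≤ R → ‖g t x ν‖ ≤ e := by
      intro t x hx
      rcases hν.1.eq_or_lt with h | h
      · rw [← h, hg0, norm_zero]
        positivity
      · exact (hgGN R hR0 ν hνb t x hx).trans (hν₁' ⟨h, hν.2.trans (min_le_left _ _)⟩).2.le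
    have := aux_fix H hG hξRAP (F := fun t x => f t x + g t x ν) (hgcomp ν)
      (l := m + e) (D := m + e) (by positivity) hcme (by
        intro t x y hx hy
        have h1 := hfl t x y (hball t x hx) (hball t y hy)
        have h2 := hgl t x y (hball t x hx) (hball t y hy)
        calc _ = ‖(f t x - f t y) + (g t x ν - g t y ν)‖ := by congr 1; abel
          _ ≤ _ := norm_add_le _ _
          _ ≤ _ := by rw [add_mul]; exact add_le_add h1 h2) hh0 hξrep (by
        intro t x hx
        have h1 := hfl t x (ξ t) (hball t x hx) (hξR t)
        have h2 := hgb t x (hball t x hx)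
        calc _ = ‖(f t x - f t (ξ t)) + g t x ν‖ := by congr 1; abel
          _ ≤ _ := norm_add_le _ _
          _ ≤ m * ‖x - ξ t‖ + e := add_le_add h1 h2
          _ ≤ m * 1 + e := by gcongr
          _ = m + e := by ring) hcme.le
    simpa only [add_assoc] using this
  · intro _ ψ hψ
    have hbd : ∀ ν ∈ Set.Ioc (0:ℝ) (min ν₁ νbar), BddAbove (Set.range fun t => ‖ψ ν t - ξ t‖) := by
      intro ν hν
      obtain ⟨-, -, h3⟩ := hψ ν ⟨hν.1.le, hν.2⟩
      exact ⟨1, by rintro _ ⟨t, rfl⟩; exact h3 t⟩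
    have hmain : ∀ ν ∈ Set.Ioc (0:ℝ) (min ν₁ νbar),
        ⨆ t, ‖ψ ν t - ξ t‖ ≤ c * GN R ν / (1 - c * m) := by
      intro ν hν
      have hbdd := hbd ν hν
      obtain ⟨h1, h2, h3⟩ := hψ ν ⟨hν.1.le, hν.2⟩
      have hνb : ν ∈ Set.Icc (0:ℝ) νbar := ⟨hν.1.le, hν.2.trans (min_le_right _ _)⟩
      have hr := hgcomp ν (ψ ν) h1 h3
      obtain ⟨C, hC⟩ := hr.1
      obtain ⟨B, hB⟩ := h1.1
      have hrep := H.repr hr.2.1.continuous hC hB (by simpa only [add_assoc] using h2)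
      have hS : ⨆ t, ‖ψ ν t - ξ t‖ ≤ c * (m * (⨆ t, ‖ψ ν t - ξ t‖) + GN R ν) := by
        refine ciSup_le fun t => ?_
        conv_lhs => rw [hrep t, hξrep t]
        refine H.bound_sub hr.2.1.continuous hh0.2.1.continuous hC hC0 (fun s => ?_) t
        have e1 := hfl s (ψ ν s) (ξ s) (hball s _ (h3 s)) (hξR s)
        have e2 := hgGN R hR0 ν hνb s (ψ ν s) (hball s _ (h3 s))
        calc _ = ‖(f s (ψ ν s) - f s (ξ s)) + g s (ψ ν s) ν‖ := by congr 1; abel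
          _ ≤ _ := norm_add_le _ _
          _ ≤ m * ‖ψ ν s - ξ s‖ + GN R ν := add_le_add e1 e2
          _ ≤ _ := by
            have := le_ciSup hbdd s
            gcongr
      rw [le_div_iff₀ (by linarith)]
      linarith
    have hle : nhdsWithin (0:ℝ) (Set.Ioc 0 (min ν₁ νbar)) ≤ nhdsWithin 0 (Set.Ioi 0) :=
      nhdsWithin_mono _ fun x hx => hx.1
    have hlim : Tendsto (fun ν => c * GN R ν / (1 - c * m))
        (nhdsWithin (0:ℝ) (Set.Ioc 0 (min ν₁ νbar))) (nhds 0) := by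
      simpa using (((hGN0 R hR0).mono_left hle).const_mul c).div_const (1 - c * m)
    have hsup : Tendsto (fun ν => ⨆ t, ‖ψ ν t - ξ t‖)
        (nhdsWithin 0 (Set.Ioc 0 (min ν₁ νbar))) (nhds 0) := by
      refine tendsto_of_tendsto_of_tendsto_of_le_of_le' tendsto_const_nhds hlim ?_ ?_
      · exact Eventually.of_forall fun ν => Real.iSup_nonneg fun t => norm_nonneg _
      · filter_upwards [self_mem_nhdsWithin] with ν hν using hmain ν hν
    refine ⟨hsup, fun t => ?_⟩
    rw [tendsto_iff_norm_sub_tendsto_zero]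
    refine tendsto_of_tendsto_of_tendsto_of_le_of_le' tendsto_const_nhds hsup ?_ ?_
    · exact Eventually.of_forall fun ν => norm_nonneg _
    · filter_upwards [self_mem_nhdsWithin] with ν hν using le_ciSup (hbd ν hν) t
end

section
/- For ν ∈ [0,ν̄] let A_ν : ℝ → Matrix (Fin n) (Fin n) ℝ be RAP matrix functions and suppose: (H1') the system x' = A₀(t)x has an (α,K,P)-exponential dichotomy whose Green kernel has the RAP-integral property, and A_ν → A₀ uniformly on ℝ as ν → 0⁺; (H2)–(H4) as before: f : ℝ × ℝⁿ → ℝⁿ is RAP in t uniformly on compacts and Lipschitz in x on balls with constants M(r) < α/(2K); ξ is the unique RAP solution of z' = A₀(t)z + f(t,z); f is C² in x with second derivatives locally Lipschitz, t ↦ (∂f/∂x)(t,ξ(t)) RAP with sup norm δ < α/(4K²), and the Green kernel of the variational system u' = (A₀(t) + (∂f/∂x)(t,ξ(t)))u has the RAP-integral property; g_ν(t,x) := g(t,x,ν) is RAP in t uniformly for (x,ν) bounded, g₀ ≡ 0, Lipschitz in x on balls with constants M₁(r,ν) → 0 and sup norms ‖g_ν‖_r → 0 as ν → 0⁺. Then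 there exist r > 0 and ν₀ = ν₀(r) > 0 such that for all ν ∈ [0,ν₀] the system x' = A_ν(t)x + f(t,x) + g_ν(t,x) has exactly one RAP solution ψ_ν with sup_{t∈ℝ} ‖ψ_ν(t) − ξ(t)‖ ≤ r; moreover, if g is uniformly continuous on ℝ × B[0,r̃] × [0,ν₀], then ψ_ν(t) → ξ(t) for every t ∈ ℝ as ν → 0⁺. -/
open MeasureTheory Filter Metric

/-- sets of `ε`-remote almost periods of a family -/
def TU {X F : Type*} [NormedAddCommGroup F] (f : ℝ → X → F) (ε : ℝ) : Set ℝ :=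
  {τ | ∀ᶠ t in Filter.cocompact ℝ, ∀ x, ‖f (t + τ) x - f t x‖ < ε}

structure UAP {X F : Type*} [NormedAddCommGroup F] (f : ℝ → X → F) : Prop where
  uc : ∀ ε > 0, ∃ d > 0, ∀ t s : ℝ, |t - s| < d → ∀ x, ‖f t x - f s x‖ < ε
  dense : ∀ ε > 0, RelativelyDense (TU f ε)

lemma tendsto_add_cocompact (c : ℝ) :
    Tendsto (fun t : ℝ => t + c) (cocompact ℝ) (cocompact ℝ) :=
  (Homeomorph.addRight c).isClosedEmbedding.tendsto_cocompact

lemma TU_sub {X F : Type*} [NormedAddCommGroup F] {f : ℝ → X → F} {ε : ℝ} {τ σ : ℝ}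
    (h1 : τ ∈ TU f ε) (h2 : σ ∈ TU f ε) : τ - σ ∈ TU f (2 * ε) := by
  have e1 := (tendsto_add_cocompact (-σ)).eventually h1
  have e2 := (tendsto_add_cocompact (-σ)).eventually h2
  simp only [TU, Set.mem_ofPred_eq]
  filter_upwards [e1, e2] with t a b x
  have a' := a x
  have b' := b x
  rw [show t + -σ + τ = t + (τ - σ) by ring] at a'
  rw [show t + -σ + σ = t by ring] at b'
  calc ‖f (t + (τ - σ)) x - f t x‖
      = ‖(f (t + (τ - σ)) x - f (t + -σ) x) - (f t x - f (t + -σ) x)‖ := by congr 1; abel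
    _ ≤ _ := norm_sub_le _ _
    _ < 2 * ε := by linarith

lemma TU_near {X F : Type*} [NormedAddCommGroup F] {f : ℝ → X → F} (hf : UAP f)
    {ε : ℝ} (hε : 0 < ε) : ∃ d > 0, ∀ τ ∈ TU f ε, ∀ σ, |τ - σ| < d → σ ∈ TU f (2 * ε) := by
  obtain ⟨d, hd, h⟩ := hf.uc ε hε
  refine ⟨d, hd, fun τ hτ σ hs => ?_⟩
  simp only [TU, Set.mem_ofPred_eq]
  filter_upwards [hτ] with t a x
  have a' := a x
  have b' := h (t + σ) (t + τ) (by rw [abs_sub_comm]; simpa using hs) x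
  calc ‖f (t + σ) x - f t x‖
      = ‖(f (t + σ) x - f (t + τ) x) + (f (t + τ) x - f t x)‖ := by congr 1; abel
    _ ≤ _ := norm_add_le _ _
    _ < 2 * ε := by linarith

lemma TU_mono {X F : Type*} [NormedAddCommGroup F] {f : ℝ → X → F} {ε ε' : ℝ} (h : ε ≤ ε') :
    TU f ε ⊆ TU f ε' := by
  intro τ hτ
  simp only [TU, Set.mem_ofPred_eq]
  filter_upwards [hτ] with t a x
  exact (a x).trans_le h

lemma RelativelyDense.mono {S T : Set ℝ} (h : RelativelyDense S) (hST : S ⊆ T) :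
    RelativelyDense T := by
  obtain ⟨l, hl, h⟩ := h
  refine ⟨l, hl, fun a => ?_⟩
  obtain ⟨τ, h1, h2⟩ := h a
  exact ⟨τ, hST h1, h2⟩

lemma inter_dense {X Y F G : Type*} [NormedAddCommGroup F] [NormedAddCommGroup G]
    {f : ℝ → X → F} {g : ℝ → Y → G} (hf : UAP f) (hg : UAP g) {ε : ℝ} (hε : 0 < ε) :
    RelativelyDense (TU f ε ∩ TU g ε) := by
  obtain ⟨l₁, hl₁, h₁⟩ := hf.dense (ε / 4) (by positivity)
  obtain ⟨l₂, hl₂, h₂⟩ := hg.dense (ε / 4) (by positivity)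
  choose τ hτ hτI using h₁
  choose σ hσ hσI using h₂
  obtain ⟨d, hd, hnear⟩ := TU_near hg (show 0 < ε / 2 by positivity)
  have hTB : TotallyBounded (Set.range fun a => τ a - σ a) := by
    refine (isCompact_Icc (a := -l₂) (b := l₁)).totallyBounded.subset ?_
    rintro _ ⟨a, rfl⟩
    have := hτI a
    have := hσI a
    simp only [Set.mem_Icc] at *
    constructor <;> linarith
  obtain ⟨t, hts, htf, hcov⟩ := Metric.finite_approx_of_totallyBounded hTB d hd
  have hts' : ∀ y ∈ t, ∃ c, τ c - σ c = y := fun y hy => hts hy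
  choose! b hb using hts'
  obtain ⟨B, hB⟩ := (htf.image (fun y => |τ (b y)|)).bddAbove
  have hB' : ∀ y ∈ t, |τ (b y)| ≤ B := fun y hy => hB ⟨y, hy, rfl⟩
  refine ⟨l₁ + 2 * |B|, by positivity, fun a => ?_⟩
  have hm := hcov ⟨a + |B|, rfl⟩
  simp only [Set.mem_iUnion, Metric.mem_ball, exists_prop] at hm
  obtain ⟨y, hy, hyd⟩ := hm
  have hby := hb y hy
  refine ⟨τ (a + |B|) - τ (b y), ⟨?_, ?_⟩, ?_⟩
  · exact TU_mono (by linarith) (TU_sub (hτ (a + |B|)) (hτ (b y)))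
  · have h3 := TU_mono (by linarith : 2 * (ε / 4) ≤ ε / 2) (TU_sub (hσ (a + |B|)) (hσ (b y)))
    have := hnear _ h3 (τ (a + |B|) - τ (b y)) (by
      rw [Real.dist_eq, ← hby] at hyd
      rw [abs_sub_comm]
      convert hyd using 2
      ring)
    exact TU_mono (by linarith) this
  · have h4 := hτI (a + |B|)
    have h5 := abs_le.1 ((hB' y hy).trans (le_abs_self B))
    simp only [Set.mem_Icc] at *
    constructor <;> linarith [h5.1, h5.2]

lemma bddUnder {u : ℝ → ℝ} {C : ℝ} (h : ∀ t, u t ≤ C) :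
    IsBoundedUnder (· ≤ ·) (cocompact ℝ) u := ⟨C, by simp [h]⟩

lemma RAP.uap {F : Type*} [NormedAddCommGroup F] {u : ℝ → F} (h : RAP u) :
    UAP (fun t (_ : Unit) => u t) := by
  obtain ⟨⟨C, hC⟩, huc, hd⟩ := h
  refine ⟨fun ε hε => ?_, fun ε hε => (hd ε hε).mono ?_⟩
  · obtain ⟨d, hd, h⟩ := Metric.uniformContinuous_iff.1 huc ε hε
    refine ⟨d, hd, fun t s hts _ => ?_⟩
    rw [← dist_eq_norm]
    exact h hts
  · intro τ hτ
    rw [Set.mem_ofPred_eq] at hτ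
    have := eventually_lt_of_limsup_lt hτ
      (bddUnder (C := 2 * C) fun t => (norm_sub_le _ _).trans (by linarith [hC t, hC (t + τ)]))
    simp only [TU, Set.mem_ofPred_eq]
    filter_upwards [this] with t ht _ using ht

lemma RAP.of_uap {F : Type*} [NormedAddCommGroup F] {u : ℝ → F} {C : ℝ} (hC : ∀ t, ‖u t‖ ≤ C)
    (h : UAP (fun t (_ : Unit) => u t)) : RAP u := by
  refine ⟨⟨C, hC⟩, Metric.uniformContinuous_iff.2 fun ε hε => ?_, fun ε hε => ?_⟩
  · obtain ⟨d, hd, h⟩ := h.uc ε hε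
    refine ⟨d, hd, fun {t s} hts => ?_⟩
    rw [dist_eq_norm]
    exact h t s hts ()
  · refine (h.dense (ε / 2) (by positivity)).mono fun τ hτ => ?_
    have : limsup (fun t => ‖u (t + τ) - u t‖) (cocompact ℝ) ≤ ε / 2 := by
      refine limsup_le_of_le ?_ ?_
      · exact IsBoundedUnder.isCoboundedUnder_le ⟨0, by simp⟩
      · filter_upwards [hτ] with t ht using (ht ()).le
    simp only [Set.mem_ofPred_eq]
    linarith

lemma RAPUniform.uap {E F : Type*} [NormedAddCommGroup E] [NormedAddCommGroup F]
    {f : ℝ → E → F} {S : Set E} (h : RAPUniform f S) :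
    UAP (fun t (x : S) => f t x) := by
  obtain ⟨⟨C, hC⟩, huc, hd⟩ := h
  refine ⟨fun ε hε => ?_, fun ε hε => (hd ε hε).mono ?_⟩
  · obtain ⟨d, hd, h⟩ := Metric.uniformContinuousOn_iff.1 huc ε hε
    refine ⟨d, hd, fun t s hts x => ?_⟩
    rw [← dist_eq_norm]
    exact h (t, x) ⟨trivial, x.2⟩ (s, x) ⟨trivial, x.2⟩ (by simpa [Prod.dist_eq, Real.dist_eq] using hts)
  · intro τ hτ
    rw [Set.mem_ofPred_eq] at hτ
    have hb : ∀ t x, (⨆ (_ : x ∈ S), ‖f (t + τ) x - f t x‖) ≤ 2 * |C| := by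
      intro t x
      refine Real.iSup_le (fun hx => ?_) (by positivity)
      exact (norm_sub_le _ _).trans (by linarith [hC t x hx, hC (t + τ) x hx, le_abs_self C])
    have := eventually_lt_of_limsup_lt hτ
      (bddUnder (C := 2 * |C|) fun t => Real.iSup_le (hb t) (by positivity))
    simp only [TU, Set.mem_ofPred_eq]
    filter_upwards [this] with t ht x
    refine lt_of_le_of_lt ?_ ht
    have h1 := le_ciSup (f := fun x => ⨆ (_ : x ∈ S), ‖f (t + τ) x - f t x‖)
      ⟨2 * |C|, by rintro _ ⟨x, rfl⟩; exact hb t x⟩ x.1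
    simpa using h1

lemma combine {X E F G : Type*} [NormedAddCommGroup E] [NormedAddCommGroup F]
    [NormedAddCommGroup G] {f : ℝ → X → E} {v : ℝ → F} {h : ℝ → G}
    (hf : UAP f) (hv : RAP v) {B : ℝ} (hB : ∀ t, ‖h t‖ ≤ B) (C : ℝ)
    (hC : ∀ t s, ∃ x, ‖h t - h s‖ ≤ C * (‖f t x - f s x‖ + ‖v t - v s‖)) : RAP h := by
  have hC' : ∀ t s, ∃ x, ‖h t - h s‖ ≤ (|C| + 1) * (‖f t x - f s x‖ + ‖v t - v s‖) := by
    intro t s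
    obtain ⟨x, hx⟩ := hC t s
    refine ⟨x, hx.trans ?_⟩
    gcongr
    linarith [le_abs_self C]
  have hc : 0 < |C| + 1 := by positivity
  have key : ∀ ε, ∀ a b : ℝ, a < ε / (2 * (|C| + 1)) → b < ε / (2 * (|C| + 1)) →
      (|C| + 1) * (a + b) < ε := by
    intro ε a b ha hb
    calc (|C| + 1) * (a + b) < (|C| + 1) * (ε / (2 * (|C| + 1)) + ε / (2 * (|C| + 1))) := by
          gcongr
      _ = ε := by field_simp; ring
  refine RAP.of_uap hB ⟨fun ε hε => ?_, fun ε hε => ?_⟩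
  · obtain ⟨d1, hd1, h1⟩ := hf.uc (ε / (2 * (|C| + 1))) (by positivity)
    obtain ⟨d2, hd2, h2⟩ := hv.uap.uc (ε / (2 * (|C| + 1))) (by positivity)
    refine ⟨min d1 d2, lt_min hd1 hd2, fun t s hts _ => ?_⟩
    obtain ⟨x, hx⟩ := hC' t s
    exact hx.trans_lt (key _ _ _ (h1 t s (hts.trans_le (min_le_left _ _)) x)
      (h2 t s (hts.trans_le (min_le_right _ _)) ()))
  · refine (inter_dense hf hv.uap (show 0 < ε / (2 * (|C| + 1)) by positivity)).mono ?_
    rintro τ ⟨h1, h2⟩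
    simp only [TU, Set.mem_ofPred_eq]
    filter_upwards [h1, h2] with t a b _
    obtain ⟨x, hx⟩ := hC' (t + τ) t
    exact hx.trans_lt (key _ _ _ (a x) (b ()))

lemma RAP.zero {F : Type*} [NormedAddCommGroup F] : RAP (fun _ : ℝ => (0 : F)) := by
  refine RAP.of_uap (C := 0) (by simp) ⟨fun ε hε => ⟨1, one_pos, by simp [hε]⟩, fun ε hε => ?_⟩
  exact ⟨1, one_pos, fun a => ⟨a, by simp [TU, hε], by simp⟩⟩

lemma RAP.add {F : Type*} [NormedAddCommGroup F] {u v : ℝ → F} (hu : RAP u) (hv : RAP v) :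
    RAP (fun t => u t + v t) := by
  obtain ⟨C, hC⟩ := hu.1
  obtain ⟨D, hD⟩ := hv.1
  refine combine (B := C + D) hu.uap hv
    (fun t => (norm_add_le _ _).trans (add_le_add (hC t) (hD t))) 1 fun t s => ⟨(), ?_⟩
  rw [one_mul, show u t + v t - (u s + v s) = (u t - u s) + (v t - v s) by abel]
  exact norm_add_le _ _

lemma RAP.sub {F : Type*} [NormedAddCommGroup F] {u v : ℝ → F} (hu : RAP u) (hv : RAP v) :
    RAP (fun t => u t - v t) := by
  obtain ⟨C, hC⟩ := hu.1
  obtain ⟨D, hD⟩ := hv.1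
  refine combine (B := C + D) hu.uap hv
    (fun t => (norm_sub_le _ _).trans (add_le_add (hC t) (hD t))) 1 fun t s => ⟨(), ?_⟩
  rw [one_mul, show u t - v t - (u s - v s) = (u t - u s) - (v t - v s) by abel]
  exact norm_sub_le _ _

lemma RAP.sum {ι F : Type*} [NormedAddCommGroup F] (s : Finset ι) {u : ι → ℝ → F}
    (hu : ∀ i, RAP (u i)) : RAP (fun t => ∑ i ∈ s, u i t) := by
  classical
  induction s using Finset.induction_on with
  | empty => simpa using RAP.zero
  | insert i s hi ih => simpa [Finset.sum_insert hi] using RAP.add (hu i) ih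

lemma RAP.smul_const {F : Type*} [NormedAddCommGroup F] [NormedSpace ℝ F] {u : ℝ → ℝ}
    (hu : RAP u) (c : F) : RAP (fun t => u t • c) := by
  obtain ⟨C, hC⟩ := hu.1
  refine combine (B := C * ‖c‖) hu.uap hu (fun t => ?_) ‖c‖ fun t s => ⟨(), ?_⟩
  · rw [norm_smul]; gcongr; exact hC t
  · rw [← sub_smul, norm_smul, mul_comm]
    gcongr
    linarith [norm_nonneg (u t - u s)]

lemma RAP.clm_apply {E F : Type*} [NormedAddCommGroup E] [NormedSpace ℝ E]
    [NormedAddCommGroup F] [NormedSpace ℝ F] {L : ℝ → E →L[ℝ] F} {v : ℝ → E}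
    (hL : RAP L) (hv : RAP v) : RAP (fun t => L t (v t)) := by
  obtain ⟨C, hC⟩ := hL.1
  obtain ⟨D, hD⟩ := hv.1
  have hC0 := (norm_nonneg _).trans (hC 0)
  have hD0 := (norm_nonneg _).trans (hD 0)
  refine combine (B := C * D) hL.uap hv (fun t => ?_) (C + D) fun t s => ⟨(), ?_⟩
  · exact (L t).le_of_opNorm_le_of_le (hC t) (hD t)
  · have e : L t (v t) - L s (v s) = L t (v t - v s) + (L t - L s) (v s) := by simp
    rw [e]
    have h1 := (L t).le_of_opNorm_le (hC t) (v t - v s)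
    have h2 := (L t - L s).le_opNorm_of_le (hD s)
    have := norm_nonneg (L t - L s)
    have := norm_nonneg (v t - v s)
    refine (norm_add_le _ _).trans ?_
    nlinarith [mul_nonneg hC0 (norm_nonneg (L t - L s)), mul_nonneg hD0 (norm_nonneg (v t - v s))]

lemma RAP.limit {F : Type*} [NormedAddCommGroup F] {u : ℝ → F}
    (h : ∀ ε > 0, ∃ v, RAP v ∧ ∀ t, ‖u t - v t‖ ≤ ε) : RAP u := by
  have tri : ∀ (v : ℝ → F) (ε : ℝ), (∀ t, ‖u t - v t‖ ≤ ε / 3) → ∀ t s, ‖v t - v s‖ < ε / 3 →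
      ‖u t - u s‖ < ε := by
    intro v ε hv t s hts
    have e : u t - u s = (u t - v t) + (v t - v s) - (u s - v s) := by abel
    rw [e]
    have h1 := norm_sub_le ((u t - v t) + (v t - v s)) (u s - v s)
    have h2 := norm_add_le (u t - v t) (v t - v s)
    linarith [hv t, hv s]
  obtain ⟨v, hv, hv'⟩ := h 1 one_pos
  obtain ⟨C, hC⟩ := hv.1
  refine RAP.of_uap (C := C + 1) (fun t => ?_) ⟨fun ε hε => ?_, fun ε hε => ?_⟩
  · have := norm_add_le (u t - v t) (v t)
    rw [sub_add_cancel] at this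
    linarith [hv' t, hC t]
  · obtain ⟨v, hv, hv'⟩ := h (ε / 3) (by positivity)
    obtain ⟨d, hd, h1⟩ := hv.uap.uc (ε / 3) (by positivity)
    exact ⟨d, hd, fun t s hts _ => tri v ε hv' t s (h1 t s hts ())⟩
  · obtain ⟨v, hv, hv'⟩ := h (ε / 3) (by positivity)
    refine (hv.uap.dense (ε / 3) (by positivity)).mono fun τ hτ => ?_
    simp only [TU, Set.mem_ofPred_eq]
    filter_upwards [hτ] with t ht _ using tri v ε hv' _ _ (ht ())

lemma UAP.comp_map {X Y F : Type*} [NormedAddCommGroup F] {f : ℝ → X → F} (hf : UAP f)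
    (φ : Y → X) : UAP (fun t y => f t (φ y)) := by
  refine ⟨fun ε hε => ?_, fun ε hε => (hf.dense ε hε).mono fun τ hτ => ?_⟩
  · obtain ⟨d, hd, h⟩ := hf.uc ε hε
    exact ⟨d, hd, fun t s hts x => h t s hts _⟩
  · simp only [TU, Set.mem_ofPred_eq]
    filter_upwards [hτ] with t ht y using ht _

lemma RAP.comp' {E F : Type*} [NormedAddCommGroup E] [NormedAddCommGroup F]
    {f : ℝ → E → F} {R m : ℝ} {C : ℝ} (hC : ∀ t x, ‖x‖ ≤ R → ‖f t x‖ ≤ C)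
    (hf : UAP (fun t (x : closedBall (0 : E) R) => f t x)) {v : ℝ → E}
    (hv : RAP v) (hvR : ∀ t, ‖v t‖ ≤ R)
    (hlip : ∀ t x y, ‖x‖ ≤ R → ‖y‖ ≤ R → ‖f t x - f t y‖ ≤ m * ‖x - y‖) :
    RAP (fun t => f t (v t)) := by
  have hmem : ∀ t, v t ∈ closedBall (0 : E) R := fun t => by simpa using hvR t
  refine combine (B := C) hf hv (fun t => hC t _ (hvR t)) (1 + |m|)
    fun t s => ⟨⟨v t, hmem t⟩, ?_⟩
  have h1 := norm_add_le (f t (v t) - f s (v t)) (f s (v t) - f s (v s))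
  rw [sub_add_sub_cancel] at h1
  have h2 := hlip s _ _ (hvR t) (hvR s)
  have h3 : m * ‖v t - v s‖ ≤ |m| * ‖v t - v s‖ := by gcongr; exact le_abs_self m
  have := mul_nonneg (abs_nonneg m) (norm_nonneg (f t (v t) - f s (v t)))
  simp only
  nlinarith [norm_nonneg (v t - v s)]


lemma RAP.comp {E F : Type*} [NormedAddCommGroup E] [NormedAddCommGroup F]
    {f : ℝ → E → F} {R m : ℝ} (hf : RAPUniform f (closedBall 0 R)) {v : ℝ → E}
    (hv : RAP v) (hvR : ∀ t, ‖v t‖ ≤ R)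
    (hlip : ∀ t x y, ‖x‖ ≤ R → ‖y‖ ≤ R → ‖f t x - f t y‖ ≤ m * ‖x - y‖) :
    RAP (fun t => f t (v t)) := by
  obtain ⟨C, hC⟩ := hf.1
  exact RAP.comp' (fun t x hx => hC t x (by simpa using hx)) hf.uap hv hvR hlip

structure Dich {E : Type*} [NormedAddCommGroup E] [NormedSpace ℝ E]
    (A U V : ℝ → E →L[ℝ] E) (P : E →L[ℝ] E) (α K : ℝ) : Prop where
  hU : ∀ t, HasDerivAt U (A t * U t) t
  hUV : ∀ t, U t * V t = 1
  hVU : ∀ t, V t * U t = 1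
  h1 : ∀ t s : ℝ, s ≤ t → ‖U t * P * V s‖ ≤ K * Real.exp (-α * (t - s))
  h2 : ∀ t s : ℝ, t < s → ‖U t * (1 - P) * V s‖ ≤ K * Real.exp (-α * (s - t))
  hα : 0 < α
  hK : 0 ≤ K

noncomputable def Gr {E : Type*} [NormedAddCommGroup E] [NormedSpace ℝ E]
    (U V : ℝ → E →L[ℝ] E) (P : E →L[ℝ] E) (t s : ℝ) : E →L[ℝ] E :=
  if s ≤ t then U t * P * V s else -(U t * (1 - P) * V s)

section Green

variable {E : Type*} [NormedAddCommGroup E] [NormedSpace ℝ E] [CompleteSpace E]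
    {A U V : ℝ → E →L[ℝ] E} {P : E →L[ℝ] E} {α K : ℝ}

lemma Dich.hV (D : Dich A U V P α K) (t : ℝ) : HasDerivAt V (-(V t * A t)) t := by
  let u : (E →L[ℝ] E)ˣ := ⟨U t, V t, D.hUV t, D.hVU t⟩
  have e : V = fun s => Ring.inverse (U s) := by
    funext s
    exact (Ring.inverse_unit (⟨U s, V s, D.hUV s, D.hVU s⟩ : (E →L[ℝ] E)ˣ)).symm
  have h := (hasFDerivAt_ringInverse (𝕜 := ℝ) u).comp_hasDerivAt t (D.hU t)
  rw [e]
  refine HasDerivAt.congr_deriv h ?_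
  rw [← e]
  change -(V t * (A t * U t) * V t) = _
  rw [mul_assoc, mul_assoc, D.hUV, mul_one]

lemma Dich.contV (D : Dich A U V P α K) : Continuous V :=
  continuous_iff_continuousAt.2 fun t => (D.hV t).continuousAt

lemma Dich.hom (D : Dich A U V P α K) {y : ℝ → E} {C : ℝ} (hC : ∀ t, ‖y t‖ ≤ C)
    (hy : ∀ t, HasDerivAt y (A t (y t)) t) (t : ℝ) : y t = 0 := by
  have hd : ∀ t, HasDerivAt (fun t => V t (y t)) 0 t := by
    intro t
    refine ((D.hV t).clm_apply (hy t)).congr_deriv ?_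
    simp
  have hc : ∀ t s, V t (y t) = V s (y s) :=
    is_const_of_deriv_eq_zero (fun t => (hd t).differentiableAt) (fun t => (hd t).deriv)
  have hyU : U t (V t (y t)) = y t := by
    have := DFunLike.congr_fun (D.hUV t) (y t)
    simpa using this
  have hC0 : 0 ≤ C := (norm_nonneg _).trans (hC 0)
  have lim : Tendsto (fun s : ℝ => K * Real.exp (-α * s) * C) atTop (nhds 0) := by
    have : Tendsto (fun s : ℝ => -α * s) atTop atBot :=
      tendsto_id.const_mul_atTop_of_neg (by linarith [D.hα])
    have := ((Real.tendsto_exp_atBot.comp this).const_mul K).mul_const C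
    simpa using this
  have z1 : (U t * P) (V t (y t)) = 0 := by
    rw [← norm_le_zero_iff]
    refine ge_of_tendsto lim ?_
    filter_upwards [eventually_ge_atTop 0] with s hs
    rw [hc t (t - s)]
    have := (U t * P * V (t - s)).le_of_opNorm_le_of_le (D.h1 t (t - s) (by linarith)) (hC (t - s))
    simpa using this
  have z2 : (U t * (1 - P)) (V t (y t)) = 0 := by
    rw [← norm_le_zero_iff]
    refine ge_of_tendsto lim ?_
    filter_upwards [eventually_gt_atTop 0] with s hs
    rw [hc t (t + s)]
    have := (U t * (1 - P) * V (t + s)).le_of_opNorm_le_of_le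
      (D.h2 t (t + s) (by linarith)) (hC (t + s))
    simpa using this
  have : (U t * P) (V t (y t)) + (U t * (1 - P)) (V t (y t)) = y t := by
    rw [← add_apply, ← mul_add]
    simpa using hyU
  rw [← this, z1, z2, add_zero]

lemma Dich.norm_Gr (D : Dich A U V P α K) (t s : ℝ) :
    ‖Gr U V P t s‖ ≤ K * Real.exp (-α * |s - t|) := by
  unfold Gr
  split_ifs with h
  · rw [abs_of_nonpos (by linarith), neg_sub]
    exact D.h1 t s h
  · rw [norm_neg, abs_of_pos (by linarith)]
    exact D.h2 t s (by linarith)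

lemma integral_exp_abs (hα : 0 < α) : ∫ s : ℝ, Real.exp (-α * |s|) = 2 / α := by
  rw [integral_comp_abs (f := fun s => Real.exp (-α * s)), integral_exp_mul_Ioi (by linarith)]
  simp
  field_simp

lemma integrable_exp_abs (hα : 0 < α) : Integrable (fun s : ℝ => Real.exp (-α * |s|)) := by
  refine Integrable.of_integral_ne_zero ?_
  rw [integral_exp_abs hα]
  positivity

lemma Dich.norm_int (D : Dich A U V P α K) {h : ℝ → E} {C : ℝ} (hC : ∀ t, ‖h t‖ ≤ C) (t : ℝ) :
    ‖∫ s, Gr U V P t s (h s)‖ ≤ 2 * K / α * C := by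
  have hi : Integrable (fun s : ℝ => K * Real.exp (-α * |s - t|) * C) :=
    (((integrable_exp_abs D.hα).comp_sub_right t).const_mul K).mul_const C
  have := norm_integral_le_of_norm_le (f := fun s => Gr U V P t s (h s)) hi
    (Eventually.of_forall fun s =>
      (Gr U V P t s).le_of_opNorm_le_of_le (D.norm_Gr t s) (hC s))
  refine this.trans (le_of_eq ?_)
  rw [integral_mul_const, integral_const_mul,
    integral_sub_right_eq_self (fun s => Real.exp (-α * |s|)) t, integral_exp_abs D.hα]
  ring

lemma Dich.intble1 (D : Dich A U V P α K) {h : ℝ → E} {C : ℝ} (hC : ∀ t, ‖h t‖ ≤ C)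
    (hh : Continuous h) (t : ℝ) : IntegrableOn (fun s => (P * V s) (h s)) (Set.Iic t) := by
  have hi : Integrable (fun s : ℝ => ‖V t‖ * (K * Real.exp (-α * |s - t|) * C)) :=
    ((((integrable_exp_abs D.hα).comp_sub_right t).const_mul K).mul_const C).const_mul _
  have hcont : Continuous (fun s => (P * V s) (h s)) :=
    (continuous_const.mul D.contV).clm_apply hh
  refine Integrable.mono' hi.integrableOn hcont.aestronglyMeasurable ?_
  filter_upwards [ae_restrict_mem measurableSet_Iic] with s hs
  have e : (P * V s) (h s) = V t ((Gr U V P t s) (h s)) := by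
    have := DFunLike.congr_fun (D.hVU t) ((P * V s) (h s))
    simp only [Gr, if_pos (show s ≤ t from hs)]
    simpa using this.symm
  rw [e]
  exact (V t).le_opNorm_of_le ((Gr U V P t s).le_of_opNorm_le_of_le (D.norm_Gr t s) (hC s))

lemma Dich.intble2 (D : Dich A U V P α K) {h : ℝ → E} {C : ℝ} (hC : ∀ t, ‖h t‖ ≤ C)
    (hh : Continuous h) (t : ℝ) : IntegrableOn (fun s => ((1 - P) * V s) (h s)) (Set.Ioi t) := by
  have hi : Integrable (fun s : ℝ => ‖V t‖ * (K * Real.exp (-α * |s - t|) * C)) :=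
    ((((integrable_exp_abs D.hα).comp_sub_right t).const_mul K).mul_const C).const_mul _
  have hcont : Continuous (fun s => ((1 - P) * V s) (h s)) :=
    (continuous_const.mul D.contV).clm_apply hh
  refine Integrable.mono' hi.integrableOn hcont.aestronglyMeasurable ?_
  filter_upwards [ae_restrict_mem measurableSet_Ioi] with s hs
  have e : ((1 - P) * V s) (h s) = V t (-(Gr U V P t s) (h s)) := by
    have := DFunLike.congr_fun (D.hVU t) (((1 - P) * V s) (h s))
    simp only [Gr, if_neg (show ¬ s ≤ t from not_le.2 hs)]
    rw [neg_apply, neg_neg]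
    exact this.symm
  rw [e]
  refine (V t).le_opNorm_of_le ?_
  rw [norm_neg]
  exact (Gr U V P t s).le_of_opNorm_le_of_le (D.norm_Gr t s) (hC s)

lemma Dich.int_eq (D : Dich A U V P α K) {h : ℝ → E} {C : ℝ} (hC : ∀ t, ‖h t‖ ≤ C)
    (hh : Continuous h) (t : ℝ) : ∫ s, Gr U V P t s (h s) =
      U t ((∫ s in Set.Iic t, (P * V s) (h s)) - ∫ s in Set.Ioi t, ((1 - P) * V s) (h s)) := by
  have i1 := D.intble1 hC hh t
  have i2 := D.intble2 hC hh t
  have e1 : Set.EqOn (fun s => Gr U V P t s (h s)) (fun s => U t ((P * V s) (h s))) (Set.Iic t) := by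
    intro s hs
    simp only [Gr, if_pos (show s ≤ t from hs)]
    rfl
  have e2 : Set.EqOn (fun s => Gr U V P t s (h s)) (fun s => -U t (((1 - P) * V s) (h s)))
      (Set.Ioi t) := by
    intro s hs
    simp only [Gr, if_neg (show ¬ s ≤ t from not_le.2 hs)]
    rfl
  have j1 : IntegrableOn (fun s => Gr U V P t s (h s)) (Set.Iic t) :=
    IntegrableOn.congr_fun ((U t).integrable_comp i1) e1.symm measurableSet_Iic
  have j2 : IntegrableOn (fun s => Gr U V P t s (h s)) (Set.Ioi t) :=
    IntegrableOn.congr_fun ((U t).integrable_comp i2).neg e2.symm measurableSet_Ioi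
  rw [← intervalIntegral.integral_Iic_add_Ioi j1 j2, setIntegral_congr_fun measurableSet_Iic e1,
    setIntegral_congr_fun measurableSet_Ioi e2, integral_neg, map_sub,
    (U t).integral_comp_comm i1, (U t).integral_comp_comm i2, ← sub_eq_add_neg]

lemma Dich.deriv (D : Dich A U V P α K) {h : ℝ → E} {C : ℝ} (hC : ∀ t, ‖h t‖ ≤ C)
    (hh : Continuous h) (t : ℝ) : HasDerivAt (fun t => ∫ s, Gr U V P t s (h s))
      (A t (∫ s, Gr U V P t s (h s)) + h t) t := by
  have c1 : Continuous (fun s => (P * V s) (h s)) :=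
    (continuous_const.mul D.contV).clm_apply hh
  have c2 : Continuous (fun s => ((1 - P) * V s) (h s)) :=
    (continuous_const.mul D.contV).clm_apply hh
  have d1 : HasDerivAt (fun t => ∫ s in Set.Iic t, (P * V s) (h s)) ((P * V t) (h t)) t := by
    have e : (fun t => ∫ s in Set.Iic t, (P * V s) (h s)) =
        fun t => (∫ s in (0:ℝ)..t, (P * V s) (h s)) + ∫ s in Set.Iic 0, (P * V s) (h s) := by
      funext t
      rw [← intervalIntegral.integral_Iic_sub_Iic (D.intble1 hC hh 0) (D.intble1 hC hh t),
        sub_add_cancel]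
    rw [e]
    exact (c1.integral_hasStrictDerivAt 0 t).hasDerivAt.add_const _
  have d2 : HasDerivAt (fun t => ∫ s in Set.Ioi t, ((1 - P) * V s) (h s))
      (-((1 - P) * V t) (h t)) t := by
    have e : (fun t => ∫ s in Set.Ioi t, ((1 - P) * V s) (h s)) =
        fun t => (∫ s in Set.Ioi 0, ((1 - P) * V s) (h s)) -
          ∫ s in (0:ℝ)..t, ((1 - P) * V s) (h s) := by
      funext t
      rw [← intervalIntegral.integral_Ioi_sub_Ioi' (D.intble2 hC hh 0) (D.intble2 hC hh t)]
      abel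
    rw [e]
    exact (c2.integral_hasStrictDerivAt 0 t).hasDerivAt.const_sub _
  have d := (D.hU t).clm_apply (d1.sub d2)
  have e : (fun t => ∫ s, Gr U V P t s (h s)) = fun t => U t ((∫ s in Set.Iic t, (P * V s) (h s)) -
      ∫ s in Set.Ioi t, ((1 - P) * V s) (h s)) := funext fun t => D.int_eq hC hh t
  rw [D.int_eq hC hh t, e]
  refine HasDerivAt.congr_deriv d ?_
  have hyU := DFunLike.congr_fun (D.hUV t) (h t)
  have e3 : (P * V t) (h t) - -((1 - P) * V t) (h t) = V t (h t) := by
    rw [sub_neg_eq_add, ← add_apply, ← add_mul]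
    simp
  rw [e3]
  congr 1

lemma Dich.rep (D : Dich A U V P α K) {h : ℝ → E} {C : ℝ} (hC : ∀ t, ‖h t‖ ≤ C)
    (hh : Continuous h) {x : ℝ → E} {B : ℝ} (hB : ∀ t, ‖x t‖ ≤ B)
    (hx : ∀ t, HasDerivAt x (A t (x t) + h t) t) (t : ℝ) : x t = ∫ s, Gr U V P t s (h s) := by
  have := D.hom (y := fun t => x t - ∫ s, Gr U V P t s (h s)) (C := B + 2 * K / α * C)
    (fun t => (norm_sub_le _ _).trans (add_le_add (hB t) (D.norm_int hC t)))
    (fun t => ((hx t).sub (D.deriv hC hh t)).congr_deriv (by rw [map_sub]; abel)) t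
  exact sub_eq_zero.1 this

end Green

lemma sup_lemma {u : ℝ → ℝ} {B θ e : ℝ} (hB : ∀ t, u t ≤ B) (hθ : θ < 1)
    (h : ∀ C, (∀ t, u t ≤ C) → ∀ t, u t ≤ θ * C + e) (t : ℝ) : u t ≤ e / (1 - θ) := by
  have hb : BddAbove (Set.range u) := ⟨B, by rintro _ ⟨t, rfl⟩; exact hB t⟩
  have h1 : ∀ t, u t ≤ ⨆ t, u t := fun t => le_ciSup hb t
  have h2 : (⨆ t, u t) ≤ θ * (⨆ t, u t) + e := ciSup_le (h _ h1)
  refine (h1 t).trans ?_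
  rw [le_div_iff₀ (by linarith)]
  nlinarith

section Core

variable {E : Type*} [NormedAddCommGroup E] [NormedSpace ℝ E] [CompleteSpace E]
    {A U V : ℝ → E →L[ℝ] E} {P : E →L[ℝ] E} {α K : ℝ}

lemma Dich.diff (D : Dich A U V P α K) {x y h k : ℝ → E} (hx : RAP x) (hy : RAP y)
    (hh : RAP h) (hk : RAP k) (dx : ∀ t, HasDerivAt x (A t (x t) + h t) t)
    (dy : ∀ t, HasDerivAt y (A t (y t) + k t) t) {C : ℝ} (hC : ∀ t, ‖h t - k t‖ ≤ C) (t : ℝ) :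
    ‖x t - y t‖ ≤ 2 * K / α * C := by
  obtain ⟨B, hB⟩ := (hx.sub hy).1
  have := D.rep hC (hh.sub hk).2.1.continuous hB
    (fun t => ((dx t).sub (dy t)).congr_deriv (by rw [map_sub]; abel)) t
  rw [this]
  exact D.norm_int hC t

lemma Dich.estimate (D : Dich A U V P α K) {ξ N0 ψ : ℝ → E} {N : ℝ → E → E} {r q e θ : ℝ}
    (hξ : RAP ξ) (hN0 : RAP N0) (dξ : ∀ t, HasDerivAt ξ (A t (ξ t) + N0 t) t)
    (hN : ∀ ψ : ℝ → E, RAP ψ → (∀ t, ‖ψ t - ξ t‖ ≤ r) → RAP (fun t => N t (ψ t)))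
    (hlip : ∀ t x y, ‖x - ξ t‖ ≤ r → ‖y - ξ t‖ ≤ r → ‖N t x - N t y‖ ≤ q * ‖x - y‖)
    (hr : 0 ≤ r) (hq : 0 ≤ q) (hθ : θ < 1) (hqθ : 2 * K / α * q = θ)
    (he : ∀ t, ‖N t (ξ t) - N0 t‖ ≤ e)
    (hψ : RAP ψ) (dψ : ∀ t, HasDerivAt ψ (A t (ψ t) + N t (ψ t)) t)
    (hψr : ∀ t, ‖ψ t - ξ t‖ ≤ r) (t : ℝ) : ‖ψ t - ξ t‖ ≤ (2 * K / α * e) / (1 - θ) := by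
  refine sup_lemma (u := fun t => ‖ψ t - ξ t‖) hψr hθ (fun C hC t => ?_) t
  have := D.diff hψ hξ (hN ψ hψ hψr) hN0 dψ dξ (C := q * C + e) (fun t => ?_) t
  · refine this.trans (le_of_eq ?_)
    rw [← hqθ]; ring
  · have h1 := norm_add_le (N t (ψ t) - N t (ξ t)) (N t (ξ t) - N0 t)
    rw [sub_add_sub_cancel] at h1
    have h2 := hlip t (ψ t) (ξ t) (hψr t) (by simpa using hr)
    have h3 := mul_le_mul_of_nonneg_left (hC t) hq
    linarith [he t]

open scoped BoundedContinuousFunction in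
lemma Dich.exists_unique (D : Dich A U V P α K) {ξ N0 : ℝ → E} {N : ℝ → E → E} {r q e θ : ℝ}
    (hG : ∀ h : ℝ → E, RAP h → RAP (fun t => ∫ s, Gr U V P t s (h s)))
    (hξ : RAP ξ) (hN0 : RAP N0) (dξ : ∀ t, HasDerivAt ξ (A t (ξ t) + N0 t) t)
    (hN : ∀ ψ : ℝ → E, RAP ψ → (∀ t, ‖ψ t - ξ t‖ ≤ r) → RAP (fun t => N t (ψ t)))
    (hlip : ∀ t x y, ‖x - ξ t‖ ≤ r → ‖y - ξ t‖ ≤ r → ‖N t x - N t y‖ ≤ q * ‖x - y‖)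
    (hr : 0 ≤ r) (hq : 0 ≤ q) (hθ : θ < 1) (hqθ : 2 * K / α * q = θ)
    (he : ∀ t, ‖N t (ξ t) - N0 t‖ ≤ e) (her : 2 * K / α * e ≤ (1 - θ) * r) :
    ∃! ψ : ℝ → E, RAP ψ ∧ (∀ t, HasDerivAt ψ (A t (ψ t) + N t (ψ t)) t) ∧
      ∀ t, ‖ψ t - ξ t‖ ≤ r := by
  have hKα : 0 ≤ 2 * K / α := div_nonneg (by linarith [D.hK]) D.hα.le
  have hθ0 : 0 ≤ θ := by rw [← hqθ]; positivity
  let T : (ℝ → E) → ℝ → E := fun ψ t => ∫ s, Gr U V P t s (N s (ψ s))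
  let S : Set (ℝ →ᵇ E) := {ψ | RAP ψ ∧ ∀ t, ‖ψ t - ξ t‖ ≤ r}
  have dT : ∀ ψ : ℝ → E, RAP ψ → (∀ t, ‖ψ t - ξ t‖ ≤ r) →
      ∀ t, HasDerivAt (T ψ) (A t (T ψ t) + N t (ψ t)) t := by
    intro ψ hψ hψr t
    have := hN ψ hψ hψr
    obtain ⟨C, hC⟩ := this.1
    exact D.deriv hC this.2.1.continuous t
  have hT : ∀ ψ : ℝ → E, RAP ψ → (∀ t, ‖ψ t - ξ t‖ ≤ r) →
      RAP (T ψ) ∧ ∀ t, ‖T ψ t - ξ t‖ ≤ r := by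
    intro ψ hψ hψr
    have h1 := hN ψ hψ hψr
    have h2 := hG _ h1
    refine ⟨h2, fun t => ?_⟩
    have := D.diff h2 hξ h1 hN0 (dT ψ hψ hψr) dξ (C := q * r + e) (fun t => ?_) t
    · refine this.trans ?_
      rw [mul_add, ← mul_assoc, hqθ]
      linarith
    · have h1 := norm_add_le (N t (ψ t) - N t (ξ t)) (N t (ξ t) - N0 t)
      rw [sub_add_sub_cancel] at h1
      have h2 := hlip t (ψ t) (ξ t) (hψr t) (by simpa using hr)
      have h3 := mul_le_mul_of_nonneg_left (hψr t) hq
      linarith [he t]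
  have hTS : ∀ ψ : S, ∃ φ : S, ∀ t, φ.1 t = T ψ.1 t := by
    rintro ⟨ψ, hψ, hψr⟩
    obtain ⟨h1, h2⟩ := hT ψ hψ hψr
    obtain ⟨C, hC⟩ := h1.1
    exact ⟨⟨BoundedContinuousFunction.ofNormedAddCommGroup (T ψ) h1.2.1.continuous C hC,
      h1, h2⟩, fun t => rfl⟩
  choose F hF using hTS
  have hclosed : IsClosed S := by
    rw [← isSeqClosed_iff_isClosed]
    intro x p hx hp
    have hp' := Metric.tendsto_atTop.1 hp
    refine ⟨RAP.limit fun ε hε => ?_, fun t => ?_⟩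
    · obtain ⟨k, hk⟩ := hp' ε hε
      refine ⟨x k, (hx k).1, fun t => ?_⟩
      rw [← dist_eq_norm, dist_comm]
      exact (BoundedContinuousFunction.dist_coe_le_dist t).trans (hk k le_rfl).le
    · refine le_of_forall_pos_le_add fun ε hε => ?_
      obtain ⟨k, hk⟩ := hp' ε hε
      have h1 := (BoundedContinuousFunction.dist_coe_le_dist t).trans (hk k le_rfl).le
      have h2 := (hx k).2 t
      rw [← dist_eq_norm] at h2 ⊢
      have h3 := dist_triangle_left (p t) (ξ t) (x k t)
      linarith
  have : CompleteSpace S := hclosed.completeSpace_coe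
  obtain ⟨Cξ, hCξ⟩ := hξ.1
  have : Nonempty S := ⟨⟨BoundedContinuousFunction.ofNormedAddCommGroup ξ hξ.2.1.continuous Cξ hCξ,
    hξ, fun t => by simpa using hr⟩⟩
  have hFc : ContractingWith θ.toNNReal F := by
    refine ⟨by simpa using hθ, LipschitzWith.of_dist_le_mul fun a b => ?_⟩
    rw [Real.coe_toNNReal _ hθ0, Subtype.dist_eq,
      BoundedContinuousFunction.dist_le (mul_nonneg hθ0 dist_nonneg)]
    intro t
    rw [hF, hF, dist_eq_norm, ← hqθ, mul_assoc]
    refine D.diff (hT _ a.2.1 a.2.2).1 (hT _ b.2.1 b.2.2).1 (hN _ a.2.1 a.2.2)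
      (hN _ b.2.1 b.2.2) (dT _ a.2.1 a.2.2) (dT _ b.2.1 b.2.2) (fun t => ?_) t
    refine (hlip t _ _ (a.2.2 t) (b.2.2 t)).trans ?_
    gcongr
    rw [← dist_eq_norm]
    exact BoundedContinuousFunction.dist_coe_le_dist t
  obtain ⟨ψ, hψ⟩ : ∃ ψ : S, F ψ = ψ := ⟨_, hFc.fixedPoint_isFixedPt⟩
  have hψ' : T ψ.1 = ψ.1 := by
    funext t
    rw [← hF, hψ]
  refine ⟨ψ.1, ⟨ψ.2.1, fun t => ?_, ψ.2.2⟩, ?_⟩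
  · have := dT ψ.1 ψ.2.1 ψ.2.2 t
    rwa [hψ'] at this
  · rintro φ ⟨hφ, dφ, hφr⟩
    have dψ : ∀ t, HasDerivAt (ψ.1 : ℝ → E) (A t (ψ.1 t) + N t (ψ.1 t)) t := fun t => by
      have := dT ψ.1 ψ.2.1 ψ.2.2 t
      rwa [hψ'] at this
    obtain ⟨B, hB⟩ := (hφ.sub ψ.2.1).1
    funext t
    have := sup_lemma (u := fun t => ‖φ t - ψ.1 t‖) (e := 0) hB hθ (fun C hC t => by
      have := D.diff hφ ψ.2.1 (hN _ hφ hφr) (hN _ ψ.2.1 ψ.2.2) dφ dψ (C := q * C) (fun t =>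
        (hlip t _ _ (hφr t) (ψ.2.2 t)).trans (mul_le_mul_of_nonneg_left (hC t) hq)) t
      rwa [← mul_assoc, hqθ, ← add_zero (θ * C)] at this) t
    rw [zero_div] at this
    exact sub_eq_zero.1 (norm_le_zero_iff.1 this)

end Core

section Mat

variable {n : ℕ}

/-- matrix to continuous linear map -/
noncomputable def cM (A : Matrix (Fin n) (Fin n) ℝ) :
    EuclideanSpace ℝ (Fin n) →L[ℝ] EuclideanSpace ℝ (Fin n) :=
  Matrix.toEuclideanCLM (𝕜 := ℝ) A

lemma opNorm_eq (A : Matrix (Fin n) (Fin n) ℝ) : opNorm A = ‖cM A‖ := rfl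

lemma mulVecE_eq (A : Matrix (Fin n) (Fin n) ℝ) (v) : mulVecE A v = cM A v := rfl

lemma cM_mul (A B : Matrix (Fin n) (Fin n) ℝ) : cM (A * B) = cM A * cM B := map_mul _ _ _
lemma cM_one : cM (1 : Matrix (Fin n) (Fin n) ℝ) = 1 := map_one _
lemma cM_sub (A B : Matrix (Fin n) (Fin n) ℝ) : cM (A - B) = cM A - cM B := map_sub _ _ _
lemma cM_neg (A : Matrix (Fin n) (Fin n) ℝ) : cM (-A) = - cM A := map_neg _ _

lemma cM_sum (A : Matrix (Fin n) (Fin n) ℝ) :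
    cM A = ∑ i, ∑ j, A i j • cM (Matrix.single i j 1) := by
  conv_lhs => rw [Matrix.matrix_eq_sum_single A]
  simp only [cM, map_sum]
  refine Finset.sum_congr rfl fun i _ => Finset.sum_congr rfl fun j _ => ?_
  rw [← map_smul]
  simp

lemma RAPMatrix.cM {A : ℝ → Matrix (Fin n) (Fin n) ℝ} (h : RAPMatrix A) :
    RAP (fun t => cM (A t)) := by
  simp_rw [fun t => cM_sum (A t)]
  exact RAP.sum _ fun i => RAP.sum _ fun j => (h i j).smul_const _

lemma dich_of {A Φ : ℝ → Matrix (Fin n) (Fin n) ℝ} {P : Matrix (Fin n) (Fin n) ℝ} {α K : ℝ}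
    (hα : 0 < α) (hK : 0 ≤ K) (hΦ : IsFundamentalMatrix A Φ) (hd : ExpDichotomy Φ α K P) :
    Dich (fun t => cM (A t)) (fun t => cM (Φ t)) (fun t => cM (Φ t)⁻¹) (cM P) α K where
  hU t := by
    have e : (fun t => cM (Φ t)) = fun t => ∑ i, ∑ j, Φ t i j • cM (Matrix.single i j 1) :=
      funext fun t => cM_sum _
    rw [e, ← cM_mul, cM_sum (A t * Φ t)]
    exact HasDerivAt.fun_sum fun i _ => HasDerivAt.fun_sum fun j _ =>
      (hΦ.2.2 t i j).smul_const (cM (Matrix.single i j 1))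
  hUV t := by
    rw [← cM_mul, Matrix.mul_nonsing_inv _ ((Matrix.isUnit_iff_isUnit_det _).1 (hΦ.2.1 t)), cM_one]
  hVU t := by
    rw [← cM_mul, Matrix.nonsing_inv_mul _ ((Matrix.isUnit_iff_isUnit_det _).1 (hΦ.2.1 t)), cM_one]
  h1 t s h := by
    rw [← cM_mul, ← cM_mul, ← opNorm_eq]
    exact hd.2.1 t s h
  h2 t s h := by
    rw [← cM_one, ← cM_sub, ← cM_mul, ← cM_mul, ← opNorm_eq]
    exact hd.2.2 t s h
  hα := hα
  hK := hK

lemma green_eq (Φ : ℝ → Matrix (Fin n) (Fin n) ℝ) (P : Matrix (Fin n) (Fin n) ℝ) (t s : ℝ) (v) :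
    mulVecE (GreenKernel Φ P t s) v =
      Gr (fun t => cM (Φ t)) (fun t => cM (Φ t)⁻¹) (cM P) t s v := by
  rw [mulVecE_eq, GreenKernel, Gr, ← cM_one, ← cM_sub, ← cM_mul, ← cM_mul, ← cM_mul, ← cM_mul,
    ← cM_neg]
  split_ifs <;> rfl

end Mat

/-- Corollary: RAP solutions of `x' = A_ν(t)x + f(t,x) + g_ν(t,x)`
under (H1') and (H2)-(H4), with convergence to `ξ` as `ν → 0⁺`. -/
theorem exists_unique_RAP_solution_perturbed_matrix_family {n : ℕ}
    (A : ℝ → ℝ → Matrix (Fin n) (Fin n) ℝ)  -- `A ν t`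
    (Φ : ℝ → Matrix (Fin n) (Fin n) ℝ)
    (P : Matrix (Fin n) (Fin n) ℝ) (α K : ℝ)
    (f : ℝ → EuclideanSpace ℝ (Fin n) → EuclideanSpace ℝ (Fin n))
    (ξ : ℝ → EuclideanSpace ℝ (Fin n))
    (g : ℝ → EuclideanSpace ℝ (Fin n) → ℝ → EuclideanSpace ℝ (Fin n))
    (νbar : ℝ) (M : ℝ → ℝ) (M₁ GN : ℝ → ℝ → ℝ)
    (hα : 0 < α) (hK : 1 ≤ K) (hνbar : 0 < νbar)
    -- (H1')
    (hARAP : ∀ ν ∈ Set.Icc (0:ℝ) νbar, RAPMatrix (A ν))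
    (hΦ : IsFundamentalMatrix (A 0) Φ)
    (hdich : ExpDichotomy Φ α K P)
    (hGreen : RAPIntegralProperty (GreenKernel Φ P))
    (hAconv : ∀ ε > 0, ∀ᶠ ν in nhdsWithin 0 (Set.Ioi 0), ∀ t : ℝ,
      opNorm (A ν t - A 0 t) ≤ ε)
    -- (H2)
    (hfRAP : ∀ S : Set (EuclideanSpace ℝ (Fin n)), IsCompact S → RAPUniform f S)
    (hM : ∀ r > 0, M r < α / (2 * K))
    (hflip : ∀ r > 0, ∀ t : ℝ, ∀ x y : EuclideanSpace ℝ (Fin n),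
      ‖x‖ ≤ r → ‖y‖ ≤ r → ‖f t x - f t y‖ ≤ M r * ‖x - y‖)
    (hξRAP : RAP ξ)
    (hξsol : ∀ t, HasDerivAt ξ (mulVecE (A 0 t) (ξ t) + f t (ξ t)) t)
    (hξuniq : ∀ η : ℝ → EuclideanSpace ℝ (Fin n), RAP η →
      (∀ t, HasDerivAt η (mulVecE (A 0 t) (η t) + f t (η t)) t) → η = ξ)
    -- (H3)
    (hfC2 : ∀ t, ContDiff ℝ 2 (f t))
    (hf2lip : ∀ r > 0, ∃ L, ∀ t : ℝ, ∀ x y : EuclideanSpace ℝ (Fin n),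
      ‖x‖ ≤ r → ‖y‖ ≤ r →
      ‖fderiv ℝ (fderiv ℝ (f t)) x - fderiv ℝ (fderiv ℝ (f t)) y‖ ≤ L * ‖x - y‖)
    (hDfRAP : RAP (fun t => fderiv ℝ (f t) (ξ t)))
    (hDfbdd : BddAbove (Set.range fun t => ‖fderiv ℝ (f t) (ξ t)‖))
    (δ : ℝ) (hδdef : δ = ⨆ t, ‖fderiv ℝ (f t) (ξ t)‖)
    (hδ : δ < α / (4 * K ^ 2))
    (hvarGreen : ∃ (Ψ : ℝ → Matrix (Fin n) (Fin n) ℝ)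
        (Q : Matrix (Fin n) (Fin n) ℝ) (β L : ℝ),
      IsFundamentalMatrix (fun t => A 0 t + clmToMatrix (fderiv ℝ (f t) (ξ t))) Ψ ∧
      ExpDichotomy Ψ β L Q ∧ RAPIntegralProperty (GreenKernel Ψ Q))
    -- (H4)
    (hgRAP : ∀ S : Set (EuclideanSpace ℝ (Fin n) × ℝ), Bornology.IsBounded S →
      RAPUniform (fun t p => g t p.1 p.2) S)
    (hg0 : ∀ t x, g t x 0 = 0)
    (hgbdd : ∀ ν ∈ Set.Icc (0:ℝ) νbar, ∀ r > 0, ∃ C, ∀ t : ℝ,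
      ∀ x : EuclideanSpace ℝ (Fin n), ‖x‖ ≤ r → ‖g t x ν‖ ≤ C)
    (hgGN : ∀ r > 0, ∀ ν ∈ Set.Icc (0:ℝ) νbar, ∀ t : ℝ,
      ∀ x : EuclideanSpace ℝ (Fin n), ‖x‖ ≤ r → ‖g t x ν‖ ≤ GN r ν)
    (hglip : ∀ r > 0, ∀ ν ∈ Set.Icc (0:ℝ) νbar, ∀ t : ℝ,
      ∀ x y : EuclideanSpace ℝ (Fin n), ‖x‖ ≤ r → ‖y‖ ≤ r →
      ‖g t x ν - g t y ν‖ ≤ M₁ r ν * ‖x - y‖)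
    (hGN0 : ∀ r > 0, Filter.Tendsto (GN r) (nhdsWithin 0 (Set.Ioi 0)) (nhds 0))
    (hM₁0 : ∀ r > 0, Filter.Tendsto (M₁ r) (nhdsWithin 0 (Set.Ioi 0)) (nhds 0)) :
    ∃ r > 0, ∃ ν₀ > 0, ν₀ ≤ νbar ∧
      (∀ ν ∈ Set.Icc (0:ℝ) ν₀,
        ∃! ψ : ℝ → EuclideanSpace ℝ (Fin n),
          RAP ψ ∧
          (∀ t, HasDerivAt ψ (mulVecE (A ν t) (ψ t) + f t (ψ t) + g t (ψ t) ν) t) ∧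
          ∀ t, ‖ψ t - ξ t‖ ≤ r) ∧
      (UniformContinuousOn
          (fun p : ℝ × EuclideanSpace ℝ (Fin n) × ℝ => g p.1 p.2.1 p.2.2)
          (Set.univ ×ˢ Metric.closedBall 0 (r + ⨆ t, ‖ξ t‖) ×ˢ Set.Icc 0 ν₀) →
        ∀ ψ : ℝ → ℝ → EuclideanSpace ℝ (Fin n),
          (∀ ν ∈ Set.Icc (0:ℝ) ν₀, RAP (ψ ν) ∧
            (∀ t, HasDerivAt (ψ ν)
              (mulVecE (A ν t) (ψ ν t) + f t (ψ ν t) + g t (ψ ν t) ν) t) ∧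
            ∀ t, ‖ψ ν t - ξ t‖ ≤ r) →
          ∀ t, Filter.Tendsto (fun ν => ψ ν t)
            (nhdsWithin 0 (Set.Ioc 0 ν₀)) (nhds (ξ t))) := by
  have hK0 : 0 < K := by linarith
  have D := dich_of hα hK0.le hΦ hdich
  have hG : ∀ h : ℝ → EuclideanSpace ℝ (Fin n), RAP h → RAP (fun t => ∫ s,
      Gr (fun t => cM (Φ t)) (fun t => cM (Φ t)⁻¹) (cM P) t s (h s)) := by
    intro h hh
    have := hGreen h hh
    simpa only [green_eq] using this
  obtain ⟨Cξ, hCξ⟩ := hξRAP.1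
  have hCξ0 : 0 ≤ Cξ := (norm_nonneg _).trans (hCξ 0)
  obtain ⟨R, hR⟩ : ∃ R, R = 1 + Cξ := ⟨_, rfl⟩
  have hR0 : 0 < R := by linarith
  have hball : ∀ t x, ‖x - ξ t‖ ≤ 1 → ‖x‖ ≤ R := by
    intro t x hx
    have := norm_add_le (x - ξ t) (ξ t)
    rw [sub_add_cancel] at this
    linarith [hCξ t]
  have hξR : ∀ t, ‖ξ t‖ ≤ R := fun t => by linarith [hCξ t]
  obtain ⟨m, hm⟩ : ∃ m, m = max (M R) 0 := ⟨_, rfl⟩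
  have hm0 : 0 ≤ m := hm ▸ le_max_right _ _
  have hmα : m < α / (2 * K) := by
    rw [hm]
    exact max_lt (hM R hR0) (by positivity)
  have hflip' : ∀ t x y, ‖x‖ ≤ R → ‖y‖ ≤ R → ‖f t x - f t y‖ ≤ m * ‖x - y‖ := by
    intro t x y hx hy
    refine (hflip R hR0 t x y hx hy).trans ?_
    gcongr
    rw [hm]
    exact le_max_left _ _
  obtain ⟨ε₀, hε₀⟩ : ∃ ε₀, ε₀ = (α / (2 * K) - m) / 4 := ⟨_, rfl⟩
  have hε₀0 : 0 < ε₀ := by rw [hε₀]; linarith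
  obtain ⟨q, hq⟩ : ∃ q, q = ε₀ + m + ε₀ := ⟨_, rfl⟩
  have hq0 : 0 ≤ q := by linarith
  have hqα : q < α / (2 * K) := by linarith
  obtain ⟨θ, hθ⟩ : ∃ θ, 2 * K / α * q = θ := ⟨_, rfl⟩
  have hc0 : 0 < 2 * K / α := by positivity
  have hθ1 : θ < 1 := by
    rw [← hθ]
    calc 2 * K / α * q < 2 * K / α * (α / (2 * K)) := by gcongr
      _ = 1 := by field_simp
  let N : ℝ → ℝ → EuclideanSpace ℝ (Fin n) → EuclideanSpace ℝ (Fin n) :=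
    fun ν t x => (cM (A ν t) - cM (A 0 t)) x + f t x + g t x ν
  have hNeq : ∀ ν t x, mulVecE (A ν t) x + f t x + g t x ν = cM (A 0 t) x + N ν t x := by
    intro ν t x
    simp only [N, mulVecE_eq, sub_apply]
    abel
  have h0mem : (0 : ℝ) ∈ Set.Icc 0 νbar := ⟨le_rfl, hνbar.le⟩
  have hN0 : RAP (fun t => f t (ξ t)) :=
    RAP.comp (hfRAP _ (isCompact_closedBall 0 R)) hξRAP hξR hflip'
  have hgood : ∀ ν ∈ Set.Icc (0:ℝ) νbar, ∀ e, (∀ t, opNorm (A ν t - A 0 t) ≤ ε₀) →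
      (∀ t x y, ‖x‖ ≤ R → ‖y‖ ≤ R → ‖g t x ν - g t y ν‖ ≤ ε₀ * ‖x - y‖) →
      (∀ t, ‖N ν t (ξ t) - f t (ξ t)‖ ≤ e) →
      (2 * K / α * e ≤ (1 - θ) * 1 → ∃! ψ : ℝ → EuclideanSpace ℝ (Fin n), RAP ψ ∧
        (∀ t, HasDerivAt ψ (cM (A 0 t) (ψ t) + N ν t (ψ t)) t) ∧ ∀ t, ‖ψ t - ξ t‖ ≤ 1) ∧
      ∀ ψ : ℝ → EuclideanSpace ℝ (Fin n), RAP ψ →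
        (∀ t, HasDerivAt ψ (cM (A 0 t) (ψ t) + N ν t (ψ t)) t) → (∀ t, ‖ψ t - ξ t‖ ≤ 1) →
        ∀ t, ‖ψ t - ξ t‖ ≤ (2 * K / α * e) / (1 - θ) := by
    intro ν hν e h1 h2 h3
    have hN : ∀ ψ : ℝ → EuclideanSpace ℝ (Fin n), RAP ψ → (∀ t, ‖ψ t - ξ t‖ ≤ 1) →
        RAP (fun t => N ν t (ψ t)) := by
      intro ψ hψ hψ1
      have hψR : ∀ t, ‖ψ t‖ ≤ R := fun t => hball t _ (hψ1 t)
      have hgS := hgRAP (closedBall 0 R ×ˢ {ν})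
        (Metric.isBounded_closedBall.prod Bornology.isBounded_singleton)
      have hgU : UAP (fun t (x : closedBall (0 : EuclideanSpace ℝ (Fin n)) R) => g t x ν) :=
        hgS.uap.comp_map (fun x : closedBall (0 : EuclideanSpace ℝ (Fin n)) R =>
          (⟨(x.1, ν), x.2, rfl⟩ :
            (closedBall (0 : EuclideanSpace ℝ (Fin n)) R ×ˢ {ν} : Set _)))
      obtain ⟨Cg, hCg⟩ := hgbdd ν hν R hR0
      exact (((hARAP ν hν).cM.sub (hARAP 0 h0mem).cM).clm_apply hψ).add
        (RAP.comp (hfRAP _ (isCompact_closedBall 0 R)) hψ hψR hflip') |>.add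
        (RAP.comp' hCg hgU hψ hψR h2)
    have hlip : ∀ t x y, ‖x - ξ t‖ ≤ 1 → ‖y - ξ t‖ ≤ 1 →
        ‖N ν t x - N ν t y‖ ≤ q * ‖x - y‖ := by
      intro t x y hx hy
      have hx' := hball t x hx
      have hy' := hball t y hy
      have e1 : N ν t x - N ν t y = cM (A ν t - A 0 t) (x - y) + (f t x - f t y) +
          (g t x ν - g t y ν) := by
        simp only [N, cM_sub, map_sub]
        abel
      rw [e1, hq, add_mul, add_mul]
      refine norm_add₃_le.trans ?_
      gcongr
      · exact (cM (A ν t - A 0 t)).le_of_opNorm_le (h1 t) _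
      · exact hflip' t x y hx' hy'
      · exact h2 t x y hx' hy'
    exact ⟨fun h4 => D.exists_unique hG hξRAP hN0 hξsol hN hlip zero_le_one hq0 hθ1 hθ h3 h4,
      fun ψ hψ dψ hψ1 => D.estimate hξRAP hN0 hξsol hN hlip zero_le_one hq0 hθ1 hθ h3 hψ dψ hψ1⟩
  have hev : ∀ e > 0, ∀ᶠ ν in nhdsWithin 0 (Set.Ioi 0), (∀ t, opNorm (A ν t - A 0 t) ≤ ε₀) ∧
      (∀ t x y, ‖x‖ ≤ R → ‖y‖ ≤ R → ‖g t x ν - g t y ν‖ ≤ ε₀ * ‖x - y‖) ∧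
      (∀ t, ‖N ν t (ξ t) - f t (ξ t)‖ ≤ e) ∧ ν ∈ Set.Icc (0:ℝ) νbar := by
    intro e he
    have hin : ∀ᶠ ν in nhdsWithin (0:ℝ) (Set.Ioi 0), ν ∈ Set.Ioc (0:ℝ) νbar :=
      Ioc_mem_nhdsGT hνbar
    filter_upwards [hin, hAconv ε₀ hε₀0, hAconv (e / (2 * R)) (by positivity),
      (hM₁0 R hR0).eventually (eventually_le_nhds hε₀0),
      (hGN0 R hR0).eventually (eventually_le_nhds (half_pos he))] with ν k1 k2 k3 k4 k5
    have k1' : ν ∈ Set.Icc (0:ℝ) νbar := ⟨k1.1.le, k1.2⟩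
    refine ⟨k2, fun t x y hx hy => ?_, fun t => ?_, k1'⟩
    · exact (hglip R hR0 ν k1' t x y hx hy).trans (by gcongr)
    · have e1 : N ν t (ξ t) - f t (ξ t) = cM (A ν t - A 0 t) (ξ t) + g t (ξ t) ν := by
        simp only [N, cM_sub]
        abel
      rw [e1]
      have j1 := (cM (A ν t - A 0 t)).le_of_opNorm_le_of_le (k3 t) (hξR t)
      have j2 := hgGN R hR0 ν k1' t (ξ t) (hξR t)
      have j3 : e / (2 * R) * R = e / 2 := by field_simp
      rw [j3] at j1
      exact (norm_add_le _ _).trans (by linarith)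
  have he₀ : 0 < (1 - θ) / (2 * K / α) := div_pos (by linarith) hc0
  obtain ⟨ν₁, hν₁, hν₁'⟩ := (mem_nhdsGT_iff_exists_Ioc_subset).1 (hev _ he₀)
  have hν₁0 : 0 < ν₁ := hν₁
  refine ⟨1, one_pos, min ν₁ νbar, lt_min hν₁0 hνbar, min_le_right _ _, ?_, ?_⟩
  · intro ν hν
    simp only [hNeq]
    rcases eq_or_lt_of_le hν.1 with h0 | h0
    · subst h0
      refine (hgood 0 h0mem 0 (fun t => ?_) (fun t x y _ _ => ?_) (fun t => ?_)).1 (by simp; linarith)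
      · rw [opNorm_eq, cM_sub, sub_self, norm_zero]; exact hε₀0.le
      · rw [hg0, hg0, sub_self, norm_zero]; positivity
      · simp [N, hg0]
    · obtain ⟨k1, k2, k3, k4⟩ := hν₁' ⟨h0, hν.2.trans (min_le_left _ _)⟩
      refine (hgood ν k4 _ k1 k2 k3).1 (le_of_eq ?_)
      rw [mul_div_cancel₀ _ hc0.ne', mul_one]
  · intro _ ψ hψ t
    rw [Metric.tendsto_nhds]
    intro ε hε
    have he1 : 0 < ε / 2 * (1 - θ) / (2 * K / α) :=
      div_pos (mul_pos (half_pos hε) (by linarith)) hc0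
    have hle : nhdsWithin (0:ℝ) (Set.Ioc 0 (min ν₁ νbar)) ≤ nhdsWithin 0 (Set.Ioi 0) :=
      nhdsWithin_mono _ fun x hx => hx.1
    filter_upwards [hle (hev _ he1), self_mem_nhdsWithin] with ν k hν
    obtain ⟨k1, k2, k3, k4⟩ := k
    obtain ⟨p1, p2, p3⟩ := hψ ν ⟨hν.1.le, hν.2⟩
    simp only [hNeq] at p2
    have := (hgood ν k4 _ k1 k2 k3).2 (ψ ν) p1 p2 p3 t
    rw [mul_div_cancel₀ _ hc0.ne', mul_div_cancel_right₀ _ (by linarith : (1 - θ) ≠ 0)] at this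
    rw [dist_eq_norm]
    linarith
end
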